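/- Let μ be a probability measure on 𝕊 whose density is Lipschitz on J_z with some constant L > 0 for some z ∈ 𝕊. Then there exists K > 0 such that for all n ≥ 1 and all t₁, t₂ ∈ [0,1], ∫ |ξₙ(x,t₂) − ξₙ(x,t₁)|⁴ dμ(x) ≤ K |t₂ − t₁|². Consequently (by Kolmogorov's tightness criterion, since ξₙ(·,0) = 0), the sequence of laws of the random paths t ↦ ξₙ(x,t) on C⁰([0,1],ℝ) is tight. -/

import Mathlib

open MeasureTheory Filter Topology Set UniformConvergence

noncomputable section

instance : Fact ((0:ℝ) < 1) := ⟨zero_lt_one⟩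

/-- The circle `𝕊 = ℝ/ℤ`. -/
abbrev Circle1 : Type := AddCircle (1 : ℝ)

/-- A `C²` expanding circle map with expansion `≥ lam` and `‖T''‖_∞ ≤ Astar`,
encoded by a lift `F : ℝ → ℝ` satisfying `F (x+1) = F x + deg`. -/
structure CM (lam Astar : ℝ) where
  F : ℝ → ℝ
  deg : ℤ
  lift_add_one : ∀ x : ℝ, F (x + 1) = F x + deg
  contDiff : ContDiff ℝ 2 F
  expanding : ∀ x : ℝ, lam ≤ deriv F x
  second_bound : ∀ x : ℝ, |deriv (deriv F) x| ≤ Astar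

namespace CM

variable {lam Astar : ℝ}

/-- The induced map on the circle. -/
def toMap (T : CM lam Astar) : Circle1 → Circle1 :=
  fun x => (↑(T.F ((AddCircle.equivIco 1 0 x : ℝ))) : Circle1)

/-- The derivative of `T`, as a function on the circle. -/
def dmap (T : CM lam Astar) : Circle1 → ℝ :=
  fun x => deriv T.F ((AddCircle.equivIco 1 0 x : ℝ))

end CM

/-- The `C¹` distance on the space of maps. -/
def dC1 {lam Astar : ℝ} (T₁ T₂ : CM lam Astar) : ℝ :=
  (⨆ x : Circle1, dist (T₁.toMap x) (T₂.toMap x)) + (⨆ x : Circle1, |T₁.dmap x - T₂.dmap x|)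

/-- The transfer operator `ℒ_T h (x) = ∑_{T y = x} h y / T' y`. -/
def transfer {lam Astar : ℝ} (T : CM lam Astar) (h : Circle1 → ℝ) : Circle1 → ℝ :=
  fun x => ∑' y : {y : Circle1 // T.toMap y = x}, h y / T.dmap y

/-- Iterated transfer operators `ℒ_k ⋯ ℒ_1` of the sequence `T_1, T_2, …` (`Ts i = T_i`). -/
def transferIter {lam Astar : ℝ} (Ts : ℕ → CM lam Astar) : ℕ → (Circle1 → ℝ) → (Circle1 → ℝ)
  | 0, h => h
  | (k+1), h => transfer (Ts (k+1)) (transferIter Ts k h)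

/-- Composition `T_k ∘ ⋯ ∘ T_1` as circle maps. -/
def mapIter {lam Astar : ℝ} (Ts : ℕ → CM lam Astar) : ℕ → Circle1 → Circle1
  | 0 => id
  | (k+1) => (Ts (k+1)).toMap ∘ mapIter Ts k

/-- Composition of the lifts `F_k ∘ ⋯ ∘ F_1`. -/
def liftIter {lam Astar : ℝ} (Ts : ℕ → CM lam Astar) : ℕ → ℝ → ℝ
  | 0 => id
  | (k+1) => (Ts (k+1)).F ∘ liftIter Ts k

/-- A real representative of `z`. -/
def zrep (z : Circle1) : ℝ := (AddCircle.equivIco 1 0 z : ℝ)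

/-- The coordinate on the cut circle `J_z = 𝕊 ∖ {z}`. -/
def arcCoord (z x : Circle1) : ℝ := ((AddCircle.equivIoc 1 (zrep z) x : ℝ))

/-- `|x − y|_z`: the length of the subarc of `J_z` connecting `x` and `y`. -/
def arcDist (z x y : Circle1) : ℝ := |arcCoord z x - arcCoord z y|

/-- `g` is Lipschitz on `J_z = 𝕊 ∖ {z}` with constant `L`. -/
def LipOnArc (z : Circle1) (L : ℝ) (g : Circle1 → ℝ) : Prop :=
  ∀ x y : Circle1, x ≠ z → y ≠ z → |g x - g y| ≤ L * arcDist z x y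

/-- A probability density w.r.t. the Haar–Lebesgue measure `𝔪` on the circle. -/
def IsProbDensity (ψ : Circle1 → ℝ) : Prop :=
  Integrable ψ volume ∧ (∫ x : Circle1, ψ x) = 1 ∧ ∀ x, 0 ≤ ψ x

/-- The class `𝒟_L`: positive probability densities whose logarithm is Lipschitz
with constant `L` on `J_z` for some `z`. -/
def memD (L : ℝ) (ψ : Circle1 → ℝ) : Prop :=
  IsProbDensity ψ ∧ (∀ x, 0 < ψ x) ∧ ∃ z : Circle1, LipOnArc z L (fun x => Real.log (ψ x))

/-- The `L¹(𝔪)` norm. -/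
def l1norm (h : Circle1 → ℝ) : ℝ := ∫ x : Circle1, |h x|

/-- The supremum norm. -/
def supNorm (h : Circle1 → ℝ) : ℝ := ⨆ x : Circle1, |h x|

/-- The Lipschitz constant of `h` (w.r.t. the metric of the circle). -/
def lipConst (h : Circle1 → ℝ) : ℝ :=
  sInf {L : ℝ | 0 ≤ L ∧ ∀ x y : Circle1, |h x - h y| ≤ L * dist x y}

/-- The Lipschitz norm `‖h‖_Lip = Lip(h) + ‖h‖_∞`. -/
def lipNorm (h : Circle1 → ℝ) : ℝ := lipConst h + supNorm h

/-- `ρ` is the density of the SRB measure of `T`: the density of a `T`-invariant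
probability measure equivalent to `𝔪`. -/
def IsSRBDensity {lam Astar : ℝ} (T : CM lam Astar) (ρ : Circle1 → ℝ) : Prop :=
  IsProbDensity ρ ∧ (∀ᵐ x : Circle1, 0 < ρ x) ∧
    Measure.map T.toMap (volume.withDensity (fun x => ENNReal.ofReal (ρ x))) =
      volume.withDensity (fun x => ENNReal.ofReal (ρ x))

section QDS

variable {lam Astar : ℝ}

/-- `x_{n,k} = T_{n,k} ∘ ⋯ ∘ T_{n,1}` for a triangular array. -/
def arrIter (Tarr : ℕ → ℕ → CM lam Astar) (n : ℕ) : ℕ → Circle1 → Circle1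
  | 0 => id
  | (k+1) => (Tarr n (k+1)).toMap ∘ arrIter Tarr n k

/-- `ℒ_{n,k} ⋯ ℒ_{n,1}` for a triangular array. -/
def arrTransfer (Tarr : ℕ → ℕ → CM lam Astar) (n : ℕ) : ℕ → (Circle1 → ℝ) → (Circle1 → ℝ)
  | 0, h => h
  | (k+1), h => transfer (Tarr n (k+1)) (arrTransfer Tarr n k h)

/-- `f_{n,k} = f ∘ T_{n,k} ∘ ⋯ ∘ T_{n,1}` evaluated at `x`. -/
def fnk (Tarr : ℕ → ℕ → CM lam Astar) (f : Circle1 → ℝ) (n k : ℕ) (x : Circle1) : ℝ :=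
  f (arrIter Tarr n k x)

/-- `ζₙ(x,t) = n⁻¹ (∑_{k<⌊nt⌋} f_{n,k}(x) + {nt}·f_{n,⌊nt⌋}(x))`. -/
def zetaP (Tarr : ℕ → ℕ → CM lam Astar) (f : Circle1 → ℝ) (n : ℕ) (x : Circle1) (t : ℝ) : ℝ :=
  (n : ℝ)⁻¹ * ((∑ k ∈ Finset.range ⌊(n : ℝ) * t⌋₊, fnk Tarr f n k x) +
    Int.fract ((n : ℝ) * t) * fnk Tarr f n ⌊(n : ℝ) * t⌋₊ x)

/-- `ξₙ(x,t) = √n ζₙ(x,t) − √n μ(ζₙ(·,t))` for a measure `μ`. -/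
def xiP (Tarr : ℕ → ℕ → CM lam Astar) (f : Circle1 → ℝ) (μ : Measure Circle1) (n : ℕ)
    (x : Circle1) (t : ℝ) : ℝ :=
  Real.sqrt n * zetaP Tarr f n x t - Real.sqrt n * ∫ y, zetaP Tarr f n y t ∂μ

/-- The Hölder continuity (exponent `η`) of the curve `γ` on `[0,1]`, w.r.t. `d_{C¹}`. -/
def HolderCurve (η : ℝ) (γ : ℝ → CM lam Astar) : Prop :=
  ∃ H : ℝ, ∀ s ∈ Icc (0:ℝ) 1, ∀ t ∈ Icc (0:ℝ) 1, dC1 (γ s) (γ t) ≤ H * |s - t| ^ η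

/-- The convergence-rate condition `sup_n n^η sup_t d_{C¹}(T_{n,⌊nt⌋}, γ_t) < ∞`. -/
def ArrayApprox (η : ℝ) (γ : ℝ → CM lam Astar) (Tarr : ℕ → ℕ → CM lam Astar) : Prop :=
  ∃ M : ℝ, ∀ n : ℕ, 1 ≤ n → ∀ t ∈ Icc (0:ℝ) 1,
    (n : ℝ) ^ η * dC1 (Tarr n ⌊(n : ℝ) * t⌋₊) (γ t) ≤ M

end QDS

/-- The path space: functions `[0,1] → ℝ` with the topology of uniform convergence;
continuous paths (with the supremum metric) embed isometrically. -/
abbrev PathSpace : Type := (Icc (0:ℝ) 1) →ᵤ ℝ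

instance : MeasurableSpace PathSpace := borel PathSpace

/-- A function `[0,1] → ℝ` (given as a function on `ℝ`) as a point of the path space. -/
def pathOf (g : ℝ → ℝ) : PathSpace := UniformFun.ofFun (fun t => g t)

/-- Evaluation of a path at time `t` (clamped to `[0,1]`). -/
def evalPath (t : ℝ) (ω : PathSpace) : ℝ := UniformFun.toFun ω (projIcc 0 1 zero_le_one t)


section Extra

variable {lam Astar : ℝ}

/-- `μ(ζₙ(·,t))` for the measure with density `ρ` w.r.t. `𝔪`. -/
def zetaMean (Tarr : ℕ → ℕ → CM lam Astar) (f : Circle1 → ℝ) (ρ : Circle1 → ℝ)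
    (n : ℕ) (t : ℝ) : ℝ :=
  ∫ y : Circle1, zetaP Tarr f n y t * ρ y

/-- `𝔪(ζₙ(·,t))`, the mean w.r.t. the Lebesgue measure. -/
def zetaMeanM (Tarr : ℕ → ℕ → CM lam Astar) (f : Circle1 → ℝ) (n : ℕ) (t : ℝ) : ℝ :=
  ∫ y : Circle1, zetaP Tarr f n y t

/-- `ξₙ(x,t) = √n ζₙ(x,t) − √n μ(ζₙ(·,t))`, where `μ` has density `ρ`. -/
def xiD (Tarr : ℕ → ℕ → CM lam Astar) (f : Circle1 → ℝ) (ρ : Circle1 → ℝ)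
    (n : ℕ) (x : Circle1) (t : ℝ) : ℝ :=
  Real.sqrt n * zetaP Tarr f n x t - Real.sqrt n * zetaMean Tarr f ρ n t

end Extra

/-- The σ-algebra `𝔉_t` on the path space, generated by the evaluations at times `s ∈ [0,t]`. -/
def pathFiltration (t : ℝ) : MeasurableSpace PathSpace :=
  ⨆ (s : ℝ) (_ : 0 ≤ s ∧ s ≤ t), MeasurableSpace.comap (evalPath s) (borel ℝ)

/-- The process `M_t(ω) = A(ω(t)) − A(ω(0)) − ½∫₀ᵗ σ̂ₛ²·A''(ω(s)) ds`. -/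
def MGproc (σ2 : ℝ → ℝ) (A : ℝ → ℝ) (t : ℝ) (ω : PathSpace) : ℝ :=
  A (evalPath t ω) - A (evalPath 0 ω) -
    (1/2) * ∫ s in (0:ℝ)..t, σ2 s * deriv (deriv A) (evalPath s ω)

/-- `P` solves the martingale problem on `C⁰([0,1],ℝ)` for the generator `½σ̂ₜ² d²/dx²`,
started at `0`:  `P` is a probability measure, concentrated on continuous paths starting at `0`,
and for every `A ∈ C_c^∞(ℝ)` the process `MGproc σ2 A` is a `P`-martingale w.r.t. the
natural filtration `𝔉_t`.  -/
def SolvesMartingaleProblem (σ2 : ℝ → ℝ) (P : Measure PathSpace) : Prop :=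
  IsProbabilityMeasure P ∧
  P {ω : PathSpace | evalPath 0 ω = 0} = 1 ∧
  P {ω : PathSpace | Continuous (UniformFun.toFun ω)} = 1 ∧
  ∀ A : ℝ → ℝ, ContDiff ℝ (⊤ : ℕ∞) A → HasCompactSupport A →
    (∀ t ∈ Icc (0:ℝ) 1, Integrable (MGproc σ2 A t) P) ∧
    (∀ t ∈ Icc (0:ℝ) 1, @Measurable PathSpace ℝ (pathFiltration t) _ (MGproc σ2 A t)) ∧
    (∀ s ∈ Icc (0:ℝ) 1, ∀ t ∈ Icc (0:ℝ) 1, s ≤ t →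
      P[MGproc σ2 A t | pathFiltration s] =ᵐ[P] MGproc σ2 A s)

end

/-!
The transfer operator of an expanding `C²` circle map contracts the cone of densities with
Lipschitz logarithm, so two initial densities are forgotten at an exponential rate, uniformly along
any composition of maps. Hence, in a product of observables along an orbit, a long time gap splits
off the later factors up to an exponentially small error, and the fourth moment of a centred sum of
`m` consecutive observables is at most a constant times `m²`, as for independent summands. This is
Kolmogorov's condition with exponents `4` and `2` for the paths `ξₙ`. Chaining over dyadic points
turns it into a Hölder bound valid off a set of small measure, uniformly in `n`, and Hölder balls of
paths starting at `0` are compact by Arzelà–Ascoli.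
-/

/-! ### Periodic functions with Lipschitz logarithm -/

/-- The Birkhoff cone of positive `1`-periodic functions on the line whose logarithm is
`a`-Lipschitz; these are the lifts of the densities on the circle handled by the transfer
operator. -/
structure PeriodicLogLipschitz (a : ℝ) (ψ : ℝ → ℝ) : Prop where
  periodic : Function.Periodic ψ 1
  pos : ∀ x, 0 < ψ x
  le_exp_mul : ∀ x y, ψ x ≤ Real.exp (a * |x - y|) * ψ y

theorem exp_mul_le_chord {a b : ℝ} (ha : 0 ≤ a) (hab : a < b) (d : ℝ) :
    Real.exp (a * d) ≤ 1 - a / b + a / b * Real.exp (b * d) := by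
  have hb : 0 < b := ha.trans_lt hab
  have := convexOn_exp.2 (mem_univ 0) (mem_univ (b * d))
    (sub_nonneg.2 ((div_lt_one hb).2 hab).le) (div_nonneg ha hb.le) (sub_add_cancel 1 (a / b))
  simpa [← mul_assoc, div_mul_cancel₀ a hb.ne'] using this

namespace PeriodicLogLipschitz

variable {a b c K : ℝ} {ψ χ : ℝ → ℝ}

theorem nonneg (h : PeriodicLogLipschitz a ψ) : 0 ≤ a := by
  have h01 := h.le_exp_mul 0 (0 + 1)
  rw [h.periodic 0, le_mul_iff_one_le_left (h.pos 0), Real.one_le_exp_iff] at h01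
  simpa using h01

theorem continuous (h : PeriodicLogLipschitz a ψ) : Continuous ψ := by
  rw [continuous_iff_continuousAt]
  intro x
  have lower : Tendsto (fun y ↦ Real.exp (-(a * |x - y|)) * ψ x) (𝓝 x) (𝓝 (ψ x)) := by
    have hc : Continuous fun y ↦ Real.exp (-(a * |x - y|)) * ψ x := by fun_prop
    simpa using hc.tendsto x
  have upper : Tendsto (fun y ↦ Real.exp (a * |y - x|) * ψ x) (𝓝 x) (𝓝 (ψ x)) := by
    have hc : Continuous fun y ↦ Real.exp (a * |y - x|) * ψ x := by fun_prop
    simpa using hc.tendsto x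
  refine tendsto_of_tendsto_of_tendsto_of_le_of_le lower upper (fun y ↦ ?_)
    fun y ↦ h.le_exp_mul y x
  calc Real.exp (-(a * |x - y|)) * ψ x
      ≤ Real.exp (-(a * |x - y|)) * (Real.exp (a * |x - y|) * ψ y) := by
        gcongr
        exact h.le_exp_mul x y
    _ = ψ y := by rw [← mul_assoc, ← Real.exp_add, neg_add_cancel, Real.exp_zero, one_mul]

theorem intervalIntegrable (h : PeriodicLogLipschitz a ψ) (s t : ℝ) :
    IntervalIntegrable ψ volume s t :=
  h.continuous.intervalIntegrable s t

theorem mono (h : PeriodicLogLipschitz a ψ) (hab : a ≤ b) : PeriodicLogLipschitz b ψ where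
  periodic := h.periodic
  pos := h.pos
  le_exp_mul x y := (h.le_exp_mul x y).trans <| by
    have := (h.pos y).le
    gcongr

theorem const (ha : 0 ≤ a) (hc : 0 < c) : PeriodicLogLipschitz a fun _ ↦ c where
  periodic _ := rfl
  pos _ := hc
  le_exp_mul _ _ := le_mul_of_one_le_left hc.le <| Real.one_le_exp <| by positivity

theorem mul (hψ : PeriodicLogLipschitz a ψ) (hχ : PeriodicLogLipschitz b χ) :
    PeriodicLogLipschitz (a + b) (fun x ↦ ψ x * χ x) where
  periodic := hψ.periodic.mul hχ.periodic
  pos x := mul_pos (hψ.pos x) (hχ.pos x)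
  le_exp_mul x y := by
    calc ψ x * χ x
        ≤ (Real.exp (a * |x - y|) * ψ y) * (Real.exp (b * |x - y|) * χ y) :=
          mul_le_mul (hψ.le_exp_mul x y) (hχ.le_exp_mul x y) (hχ.pos x).le
            (mul_pos (Real.exp_pos _) (hψ.pos y)).le
      _ = Real.exp ((a + b) * |x - y|) * (ψ y * χ y) := by rw [add_mul, Real.exp_add]; ring

theorem inv (h : PeriodicLogLipschitz a ψ) : PeriodicLogLipschitz a (fun x ↦ (ψ x)⁻¹) where
  periodic x := by simp only [h.periodic x]
  pos x := inv_pos.2 (h.pos x)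
  le_exp_mul x y := by
    rw [inv_le_iff_one_le_mul₀ (h.pos x), mul_right_comm, ← div_eq_mul_inv, one_le_div (h.pos y),
      abs_sub_comm]
    exact h.le_exp_mul y x

theorem of_lipschitz (hc : 0 < c) (hψ : Function.Periodic ψ 1) (hcψ : ∀ x, c ≤ ψ x)
    (hK : ∀ x y, ψ x - ψ y ≤ K * |x - y|) : PeriodicLogLipschitz (K / c) ψ where
  periodic := hψ
  pos x := hc.trans_le (hcψ x)
  le_exp_mul x y := by
    have hK_nonneg : 0 ≤ K := by
      have hK01 := hK (0 + 1) 0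
      rw [hψ 0] at hK01
      simpa using hK01
    calc ψ x ≤ K / c * |x - y| * c + ψ y := by
          rw [div_mul_eq_mul_div, div_mul_cancel₀ _ hc.ne']
          linarith [hK x y]
      _ ≤ K / c * |x - y| * ψ y + ψ y := by
          gcongr
          exact hcψ y
      _ = (K / c * |x - y| + 1) * ψ y := by ring
      _ ≤ Real.exp (K / c * |x - y|) * ψ y :=
          mul_le_mul_of_nonneg_right (Real.add_one_le_exp _) (hc.trans_le (hcψ y)).le

theorem le_exp_mul_of_dist_le_one (h : PeriodicLogLipschitz a ψ) {x y : ℝ} (hxy : |x - y| ≤ 1) :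
    ψ x ≤ Real.exp a * ψ y := by
  refine (h.le_exp_mul x y).trans ?_
  have := (h.pos y).le
  gcongr
  exact mul_le_of_le_one_right h.nonneg hxy

theorem le_exp_mul_integral (h : PeriodicLogLipschitz a ψ) (y : ℝ) :
    ψ y ≤ Real.exp a * ∫ x in (0 : ℝ)..1, ψ x := by
  calc ψ y = ∫ _ in y..(y + 1), ψ y := by simp
    _ ≤ ∫ x in y..(y + 1), Real.exp a * ψ x := by
        refine intervalIntegral.integral_mono_on (by linarith) (by simp)
          ((h.intervalIntegrable _ _).const_mul _) fun x hx ↦ ?_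
        exact h.le_exp_mul_of_dist_le_one (abs_le.2 ⟨by linarith [hx.2], by linarith [hx.1]⟩)
    _ = Real.exp a * ∫ x in (0 : ℝ)..1, ψ x := by
        rw [intervalIntegral.integral_const_mul, h.periodic.intervalIntegral_add_eq y 0, zero_add]

theorem exp_neg_mul_integral_le (h : PeriodicLogLipschitz a ψ) (y : ℝ) :
    Real.exp (-a) * (∫ x in (0 : ℝ)..1, ψ x) ≤ ψ y := by
  rw [Real.exp_neg, inv_mul_le_iff₀ (Real.exp_pos a)]
  calc ∫ x in (0 : ℝ)..1, ψ x = ∫ x in y..(y + 1), ψ x := by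
        rw [h.periodic.intervalIntegral_add_eq y 0, zero_add]
    _ ≤ ∫ _ in y..(y + 1), Real.exp a * ψ y := by
        refine intervalIntegral.integral_mono_on (by linarith) (h.intervalIntegrable _ _)
          (by simp) fun x hx ↦ ?_
        exact h.le_exp_mul_of_dist_le_one (abs_le.2 ⟨by linarith [hx.1], by linarith [hx.2]⟩)
    _ = Real.exp a * ψ y := by simp

theorem integral_pos (h : PeriodicLogLipschitz a ψ) : 0 < ∫ x in (0 : ℝ)..1, ψ x :=
  intervalIntegral.intervalIntegral_pos_of_pos (h.intervalIntegrable _ _) h.pos one_pos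

theorem sub_const (h : PeriodicLogLipschitz a ψ) (ha : 0 < a) (hab : a < b) (hc : 0 < c)
    (hcψ : ∀ x, c ≤ ψ x) :
    PeriodicLogLipschitz b (fun x ↦ ψ x - (1 - a / b) * c) := by
  have hb : 0 < b := ha.trans hab
  have hratio : a / b < 1 := (div_lt_one hb).2 hab
  have hratio_pos : 0 < a / b := div_pos ha hb
  refine ⟨fun x ↦ by simp only [h.periodic x], fun x ↦ by nlinarith [hcψ x], fun x y ↦ ?_⟩
  have chord := mul_le_mul_of_nonneg_right (exp_mul_le_chord ha.le hab |x - y|) (h.pos y).le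
  have hexp : 1 ≤ Real.exp (b * |x - y|) := Real.one_le_exp (by positivity)
  have gap : 0 ≤ (1 - a / b) * (Real.exp (b * |x - y|) - 1) * (ψ y - c) :=
    mul_nonneg (mul_nonneg (by linarith) (by linarith)) (by linarith [hcψ y])
  linarith [h.le_exp_mul x y]

end PeriodicLogLipschitz

/-! ### Transfer operators of expanding lifts -/

theorem periodic_one_sum_translates {h : ℝ → ℝ} {d : ℕ} (hh : Function.Periodic h d) :
    Function.Periodic (fun x ↦ ∑ j ∈ Finset.range d, h (x + j)) 1 := by
  intro x
  calc ∑ j ∈ Finset.range d, h (x + 1 + j)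
      = ∑ j ∈ Finset.range d, h (x + (j + 1 : ℕ)) :=
        Finset.sum_congr rfl fun j _ ↦ by rw [Nat.cast_succ, add_assoc, add_comm (1 : ℝ)]
    _ = ∑ j ∈ Finset.range (d + 1), h (x + j) - h x := by
        rw [Finset.sum_range_succ', Nat.cast_zero, add_zero, add_sub_cancel_right]
    _ = ∑ j ∈ Finset.range d, h (x + j) := by
        rw [Finset.sum_range_succ, hh, add_sub_cancel_right]

theorem integral_mul_eq_integral_sum_translates_mul {h φ : ℝ → ℝ} (hh : Continuous h)
    (hφ : Continuous φ) (hφper : Function.Periodic φ 1) (d : ℕ) :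
    ∫ x in (0 : ℝ)..d, h x * φ x =
      ∫ x in (0 : ℝ)..1, (∑ j ∈ Finset.range d, h (x + j)) * φ x := by
  have hcont : Continuous fun x ↦ h x * φ x := hh.mul hφ
  have split := intervalIntegral.sum_integral_adjacent_intervals (μ := volume)
    (a := fun k : ℕ ↦ (k : ℝ)) (n := d) fun k _ ↦ hcont.intervalIntegrable k (k + 1 : ℕ)
  rw [Nat.cast_zero] at split
  simp only [← split, Finset.sum_mul]
  rw [intervalIntegral.integral_finsetSum fun j _ ↦
    Continuous.intervalIntegrable (by fun_prop) _ _]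
  refine Finset.sum_congr rfl fun j _ ↦ ?_
  calc ∫ x in (j : ℝ)..(j + 1 : ℕ), h x * φ x
      = ∫ x in (0 : ℝ)..1, h (x + j) * φ (x + j) := by
        rw [intervalIntegral.integral_comp_add_right fun x ↦ h x * φ x, zero_add, Nat.cast_succ,
          add_comm (1 : ℝ)]
    _ = ∫ x in (0 : ℝ)..1, h (x + j) * φ x := by
        refine intervalIntegral.integral_congr fun x _ ↦ ?_
        have := hφper.nat_mul j x
        rw [mul_one] at this
        simp only [this]

namespace CM

variable {lam Astar : ℝ}

theorem Astar_nonneg (T : CM lam Astar) : 0 ≤ Astar := (abs_nonneg _).trans (T.second_bound 0)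

variable (T : CM lam Astar)

theorem hasDerivAt_lift (x : ℝ) : HasDerivAt T.F (deriv T.F x) x :=
  (T.contDiff.differentiable (by norm_num) x).hasDerivAt

theorem continuous_lift : Continuous T.F := T.contDiff.continuous

theorem differentiable_deriv_lift : Differentiable ℝ (deriv T.F) :=
  (contDiff_succ_iff_deriv (n := 1).1 T.contDiff).2.2.differentiable one_ne_zero

theorem periodic_deriv_lift : Function.Periodic (deriv T.F) 1 := by
  intro x
  rw [← deriv_comp_add_const, funext T.lift_add_one, deriv_add_const]

theorem periodic_comp_lift {α : Type*} {φ : ℝ → α} (hφ : Function.Periodic φ 1) :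
    Function.Periodic (fun x ↦ φ (T.F x)) 1 := by
  intro x
  simpa [T.lift_add_one] using hφ.int_mul T.deg (T.F x)

theorem mul_sub_le_lift_sub {x y : ℝ} (h : x ≤ y) : lam * (y - x) ≤ T.F y - T.F x :=
  convex_univ.mul_sub_le_image_sub_of_le_deriv T.continuous_lift.continuousOn
    (fun x _ ↦ (T.hasDerivAt_lift x).differentiableAt.differentiableWithinAt)
    (fun x _ ↦ T.expanding x) x (mem_univ x) y (mem_univ y) h

/-- The inverse of the lift; its values at `x, x + 1, …, x + deg - 1` are, modulo `1`, the
preimages of `x` under the circle map. -/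
noncomputable def invLift : ℝ → ℝ := Function.invFun T.F

/-- The lift to `ℝ` of the transfer operator: `transferLift T ψ` is the sum of `ψ / F'` over the
inverse branches. -/
noncomputable def transferLift (ψ : ℝ → ℝ) (x : ℝ) : ℝ :=
  ∑ j ∈ Finset.range T.deg.toNat,
    ψ (T.invLift (x + j)) * (deriv T.F (T.invLift (x + j)))⁻¹

theorem transferLift_sub (ψ χ : ℝ → ℝ) :
    T.transferLift (ψ - χ) = T.transferLift ψ - T.transferLift χ := by
  ext x
  simp only [transferLift, Pi.sub_apply, sub_mul, Finset.sum_sub_distrib]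

theorem deriv_lift_pos (hlam : 0 < lam) (x : ℝ) : 0 < deriv T.F x :=
  hlam.trans_le (T.expanding x)

theorem strictMono_lift (hlam : 0 < lam) : StrictMono T.F :=
  strictMono_of_deriv_pos (T.deriv_lift_pos hlam)

theorem surjective_lift (hlam : 0 < lam) : Function.Surjective T.F := by
  have line_atTop : Tendsto (fun x ↦ T.F 0 + lam * x) atTop atTop :=
    tendsto_atTop_add_const_left _ _ (tendsto_id.const_mul_atTop hlam)
  have line_atBot : Tendsto (fun x ↦ T.F 0 + lam * x) atBot atBot :=
    tendsto_atBot_add_const_left _ _ (tendsto_id.const_mul_atBot hlam)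
  refine T.continuous_lift.surjective (tendsto_atTop_mono' _ ?_ line_atTop)
    (tendsto_atBot_mono' _ ?_ line_atBot)
  · filter_upwards [eventually_ge_atTop 0] with x hx
    linarith [T.mul_sub_le_lift_sub hx]
  · filter_upwards [eventually_le_atBot 0] with x hx
    linarith [T.mul_sub_le_lift_sub hx]

theorem deg_pos (hlam : 0 < lam) : 0 < T.deg := by
  have h := T.strictMono_lift hlam (lt_add_one 0)
  rw [T.lift_add_one] at h
  exact_mod_cast (lt_add_iff_pos_right _).1 h

theorem toNat_deg (hlam : 0 < lam) : (T.deg.toNat : ℝ) = T.deg := by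
  exact_mod_cast Int.toNat_of_nonneg (T.deg_pos hlam).le

theorem lift_invLift (hlam : 0 < lam) (x : ℝ) : T.F (T.invLift x) = x :=
  Function.invFun_eq (T.surjective_lift hlam x)

theorem invLift_lift (hlam : 0 < lam) (x : ℝ) : T.invLift (T.F x) = x :=
  Function.leftInverse_invFun (T.strictMono_lift hlam).injective x

theorem invLift_add_deg (hlam : 0 < lam) (x : ℝ) :
    T.invLift (x + T.deg.toNat) = T.invLift x + 1 := by
  apply (T.strictMono_lift hlam).injective
  rw [T.lift_invLift hlam, T.lift_add_one, T.lift_invLift hlam, T.toNat_deg hlam]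

theorem abs_invLift_sub_le (hlam : 0 < lam) (x y : ℝ) :
    |T.invLift x - T.invLift y| ≤ |x - y| / lam := by
  wlog hxy : T.invLift y ≤ T.invLift x generalizing x y
  · rw [abs_sub_comm, abs_sub_comm x]
    exact this y x (le_of_not_ge hxy)
  have hexp := T.mul_sub_le_lift_sub hxy
  rw [T.lift_invLift hlam, T.lift_invLift hlam] at hexp
  rw [le_div_iff₀' hlam, abs_of_nonneg (sub_nonneg.2 hxy)]
  exact hexp.trans (le_abs_self _)

theorem continuous_invLift (hlam : 0 < lam) : Continuous T.invLift :=
  (LipschitzWith.of_dist_le_mul (K := lam⁻¹.toNNReal) fun x y ↦ by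
    rw [Real.dist_eq, Real.dist_eq, Real.coe_toNNReal _ (inv_pos.2 hlam).le, inv_mul_eq_div]
    exact T.abs_invLift_sub_le hlam x y).continuous

theorem continuous_weight_comp_invLift (hlam : 0 < lam) {ψ : ℝ → ℝ} (hψ : Continuous ψ) :
    Continuous fun x ↦ ψ (T.invLift x) * (deriv T.F (T.invLift x))⁻¹ :=
  (hψ.comp (T.continuous_invLift hlam)).mul <|
    (T.differentiable_deriv_lift.continuous.comp (T.continuous_invLift hlam)).inv₀
      fun _ ↦ (T.deriv_lift_pos hlam _).ne'

theorem periodic_weight_comp_invLift (hlam : 0 < lam) {ψ : ℝ → ℝ} (hψ : Function.Periodic ψ 1) :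
    Function.Periodic (fun x ↦ ψ (T.invLift x) * (deriv T.F (T.invLift x))⁻¹) T.deg.toNat := by
  intro x
  simp only [T.invLift_add_deg hlam, hψ (T.invLift x), T.periodic_deriv_lift (T.invLift x)]

theorem continuous_transferLift (hlam : 0 < lam) {ψ : ℝ → ℝ} (hψ : Continuous ψ) :
    Continuous (T.transferLift ψ) :=
  continuous_finsetSum _ fun j _ ↦
    (T.continuous_weight_comp_invLift hlam hψ).comp (continuous_add_const (j : ℝ))

theorem periodic_transferLift (hlam : 0 < lam) {ψ : ℝ → ℝ} (hψ : Function.Periodic ψ 1) :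
    Function.Periodic (T.transferLift ψ) 1 :=
  periodic_one_sum_translates (T.periodic_weight_comp_invLift hlam hψ)

theorem integral_mul_comp_lift (hlam : 0 < lam) {ψ φ : ℝ → ℝ} (hψ : Continuous ψ)
    (hψper : Function.Periodic ψ 1) (hφ : Continuous φ) (hφper : Function.Periodic φ 1) :
    ∫ x in (0 : ℝ)..1, ψ x * φ (T.F x) = ∫ x in (0 : ℝ)..1, T.transferLift ψ x * φ x := by
  set w : ℝ → ℝ := fun y ↦ ψ (T.invLift y) * (deriv T.F (T.invLift y))⁻¹ with hw
  have hw_cont : Continuous w := T.continuous_weight_comp_invLift hlam hψ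
  have hφ_deg : Function.Periodic φ T.deg.toNat := by simpa using hφper.nat_mul T.deg.toNat
  have hwφ : Function.Periodic (fun y ↦ w y * φ y) T.deg.toNat :=
    (T.periodic_weight_comp_invLift hlam hψper).mul hφ_deg
  have hF1 : T.F 1 = T.F 0 + T.deg.toNat := by
    rw [T.toNat_deg hlam, ← T.lift_add_one, zero_add]
  calc ∫ x in (0 : ℝ)..1, ψ x * φ (T.F x)
      = ∫ x in (0 : ℝ)..1, ((fun y ↦ w y * φ y) ∘ T.F) x * deriv T.F x := by
        refine intervalIntegral.integral_congr fun x _ ↦ ?_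
        have := (T.deriv_lift_pos hlam x).ne'
        simp only [hw, Function.comp_apply, T.invLift_lift hlam]
        field_simp
    _ = ∫ y in T.F 0..T.F 0 + T.deg.toNat, w y * φ y := by
        rw [← hF1]
        exact intervalIntegral.integral_comp_mul_deriv (fun x _ ↦ T.hasDerivAt_lift x)
          T.differentiable_deriv_lift.continuous.continuousOn (hw_cont.mul hφ)
    _ = ∫ y in (0 : ℝ)..T.deg.toNat, w y * φ y := by
        rw [hwφ.intervalIntegral_add_eq (T.F 0) 0, zero_add]
    _ = ∫ x in (0 : ℝ)..1, T.transferLift ψ x * φ x :=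
        integral_mul_eq_integral_sum_translates_mul hw_cont hφ hφper _

theorem periodicLogLipschitz_deriv_lift (hlam : 0 < lam) :
    PeriodicLogLipschitz (Astar / lam) (deriv T.F) := by
  refine PeriodicLogLipschitz.of_lipschitz hlam T.periodic_deriv_lift T.expanding fun x y ↦ ?_
  exact (le_abs_self _).trans <| convex_univ.norm_image_sub_le_of_norm_deriv_le
    (fun x _ ↦ T.differentiable_deriv_lift x) (fun x _ ↦ T.second_bound x) (mem_univ y) (mem_univ x)

theorem periodicLogLipschitz_transferLift (hlam : 0 < lam) {b : ℝ} {ψ : ℝ → ℝ}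
    (hψ : PeriodicLogLipschitz b ψ) :
    PeriodicLogLipschitz ((b + Astar / lam) / lam) (T.transferLift ψ) := by
  have weight := hψ.mul (T.periodicLogLipschitz_deriv_lift hlam).inv
  refine ⟨T.periodic_transferLift hlam hψ.periodic, fun x ↦ ?_, fun x y ↦ ?_⟩
  · exact Finset.sum_pos (fun j _ ↦ weight.pos _)
      (Finset.nonempty_range_iff.2 (by have := T.deg_pos hlam; lia))
  · simp only [transferLift, Finset.mul_sum]
    refine Finset.sum_le_sum fun j _ ↦ (weight.le_exp_mul _ (T.invLift (y + j))).trans ?_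
    have hbranch := T.abs_invLift_sub_le hlam (x + j) (y + j)
    rw [add_sub_add_right_eq_sub] at hbranch
    refine mul_le_mul_of_nonneg_right (Real.exp_le_exp.2 ?_) (weight.pos _).le
    calc (b + Astar / lam) * |T.invLift (x + j) - T.invLift (y + j)|
        ≤ (b + Astar / lam) * (|x - y| / lam) := mul_le_mul_of_nonneg_left hbranch weight.nonneg
      _ = (b + Astar / lam) / lam * |x - y| := by ring

theorem integral_transferLift (hlam : 0 < lam) {ψ : ℝ → ℝ} (hψ : Continuous ψ)
    (hψper : Function.Periodic ψ 1) :
    ∫ x in (0 : ℝ)..1, T.transferLift ψ x = ∫ x in (0 : ℝ)..1, ψ x := by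
  simpa using (T.integral_mul_comp_lift hlam hψ hψper (continuous_const (y := (1 : ℝ)))
    fun _ ↦ rfl).symm

end CM

/-! ### Memory loss -/

section LiftIter

variable {lam Astar : ℝ} (Ts : ℕ → CM lam Astar)

theorem liftIter_add (k j : ℕ) (x : ℝ) :
    liftIter Ts (k + j) x = liftIter (fun i ↦ Ts (k + i)) j (liftIter Ts k x) := by
  induction j with
  | zero => rfl
  | succ j ih => exact congrArg (Ts (k + j + 1)).F ih

theorem continuous_liftIter (n : ℕ) : Continuous (liftIter Ts n) := by
  induction n with
  | zero => exact continuous_id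
  | succ n ih => exact (Ts (n + 1)).continuous_lift.comp ih

theorem periodic_comp_liftIter {φ : ℝ → ℝ} (hφ : Function.Periodic φ 1) (n : ℕ) :
    Function.Periodic (fun x ↦ φ (liftIter Ts n x)) 1 := by
  induction n generalizing φ with
  | zero => exact hφ
  | succ n ih => exact ih ((Ts (n + 1)).periodic_comp_lift hφ)

/-- The composition `𝓛ₙ ∘ ⋯ ∘ 𝓛₁` of lifted transfer operators, dual to `liftIter Ts n`. -/
noncomputable def transferLiftIter : ℕ → (ℝ → ℝ) → ℝ → ℝ
  | 0, ψ => ψ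
  | n + 1, ψ => (Ts (n + 1)).transferLift (transferLiftIter n ψ)

theorem continuous_transferLiftIter (hlam : 0 < lam) {ψ : ℝ → ℝ} (hψ : Continuous ψ) (n : ℕ) :
    Continuous (transferLiftIter Ts n ψ) := by
  induction n with
  | zero => exact hψ
  | succ n ih => exact (Ts (n + 1)).continuous_transferLift hlam ih

theorem periodic_transferLiftIter (hlam : 0 < lam) {ψ : ℝ → ℝ} (hψ : Function.Periodic ψ 1)
    (n : ℕ) : Function.Periodic (transferLiftIter Ts n ψ) 1 := by
  induction n with
  | zero => exact hψ
  | succ n ih => exact (Ts (n + 1)).periodic_transferLift hlam ih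

theorem integral_mul_comp_liftIter (hlam : 0 < lam) {ψ φ : ℝ → ℝ} (hψ : Continuous ψ)
    (hψper : Function.Periodic ψ 1) (hφ : Continuous φ) (hφper : Function.Periodic φ 1) (n : ℕ) :
    ∫ x in (0 : ℝ)..1, ψ x * φ (liftIter Ts n x) =
      ∫ x in (0 : ℝ)..1, transferLiftIter Ts n ψ x * φ x := by
  induction n generalizing φ with
  | zero => rfl
  | succ n ih =>
    rw [transferLiftIter, ← (Ts (n + 1)).integral_mul_comp_lift hlam
      (continuous_transferLiftIter Ts hlam hψ n) (periodic_transferLiftIter Ts hlam hψper n) hφ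
      hφper]
    exact ih (hφ.comp (Ts (n + 1)).continuous_lift) ((Ts (n + 1)).periodic_comp_lift hφper)

theorem integral_comp_liftIter (hlam : 0 < lam) {φ : ℝ → ℝ} (hφ : Continuous φ)
    (hφper : Function.Periodic φ 1) (n : ℕ) :
    ∫ x in (0 : ℝ)..1, φ (liftIter Ts n x) =
      ∫ x in (0 : ℝ)..1, transferLiftIter Ts n (fun _ ↦ 1) x * φ x := by
  simpa using integral_mul_comp_liftIter Ts hlam (continuous_const (y := (1 : ℝ))) (fun _ ↦ rfl)
    hφ hφper n

theorem integral_transferLiftIter_one (hlam : 0 < lam) (n : ℕ) :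
    ∫ x in (0 : ℝ)..1, transferLiftIter Ts n (fun _ ↦ 1) x = 1 := by
  simpa using (integral_comp_liftIter Ts hlam (continuous_const (y := (1 : ℝ)))
    (fun _ ↦ rfl) n).symm

variable {Ts} {a b : ℝ}

theorem periodicLogLipschitz_transferLiftIter (hlam : 0 < lam)
    (hcone : (a + Astar / lam) / lam ≤ a) {ψ : ℝ → ℝ} (hψ : PeriodicLogLipschitz a ψ) (n : ℕ) :
    PeriodicLogLipschitz a (transferLiftIter Ts n ψ) := by
  induction n with
  | zero => exact hψ
  | succ n ih => exact ((Ts (n + 1)).periodicLogLipschitz_transferLift hlam ih).mono hcone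

theorem integral_le_exp_mul_integral_comp_liftIter (hlam : 0 < lam) (ha : 0 ≤ a)
    (hcone : (a + Astar / lam) / lam ≤ a) {φ : ℝ → ℝ} (hφ : Continuous φ)
    (hφper : Function.Periodic φ 1) (hφ_nonneg : ∀ x, 0 ≤ φ x) (n : ℕ) :
    ∫ x in (0 : ℝ)..1, φ x ≤ Real.exp a * ∫ x in (0 : ℝ)..1, φ (liftIter Ts n x) := by
  have density : PeriodicLogLipschitz a (transferLiftIter Ts n fun _ ↦ 1) :=
    periodicLogLipschitz_transferLiftIter hlam hcone (PeriodicLogLipschitz.const ha one_pos) n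
  rw [integral_comp_liftIter Ts hlam hφ hφper, ← inv_mul_le_iff₀ (Real.exp_pos a), ← Real.exp_neg,
    ← intervalIntegral.integral_const_mul]
  refine intervalIntegral.integral_mono_on zero_le_one
    ((continuous_const.mul hφ).intervalIntegrable _ _)
    ((density.continuous.mul hφ).intervalIntegrable _ _) fun x _ ↦ ?_
  have lower := density.exp_neg_mul_integral_le x
  rw [integral_transferLiftIter_one Ts hlam, mul_one] at lower
  exact mul_le_mul_of_nonneg_right lower (hφ_nonneg x)

/-- The factor by which one step of the coupling contracts the uncoupled mass, for the cones of
`a`- and `b`-log-Lipschitz densities. -/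
noncomputable def couplingRate (a b : ℝ) : ℝ := 1 - (1 - a / b) * Real.exp (-a)

theorem couplingRate_nonneg (ha : 0 < a) (hab : a < b) : 0 ≤ couplingRate a b := by
  have hexp : Real.exp (-a) ≤ 1 := Real.exp_le_one_iff.2 (by linarith)
  have hratio : 0 < a / b := div_pos ha (ha.trans hab)
  have : (1 - a / b) * Real.exp (-a) ≤ 1 * 1 := by
    refine mul_le_mul (by linarith) hexp (Real.exp_pos _).le zero_le_one
  rw [couplingRate]
  linarith

theorem couplingRate_lt_one (ha : 0 < a) (hab : a < b) : couplingRate a b < 1 :=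
  sub_lt_self _ (mul_pos (sub_pos.2 ((div_lt_one (ha.trans hab)).2 hab)) (Real.exp_pos _))

/-- The transfer operator maps both functions into the smaller cone, where they exceed a common
constant; subtracting most of it leaves them in the larger cone. -/
theorem CM.exists_coupling (T : CM lam Astar) (hlam : 0 < lam) (ha : 0 < a) (hab : a < b)
    (hcone : (b + Astar / lam) / lam ≤ a) {ψ χ : ℝ → ℝ} {m : ℝ} (hψ : PeriodicLogLipschitz b ψ)
    (hχ : PeriodicLogLipschitz b χ) (hψm : ∫ x in (0 : ℝ)..1, ψ x = m)
    (hχm : ∫ x in (0 : ℝ)..1, χ x = m) :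
    ∃ ψ' χ' : ℝ → ℝ, PeriodicLogLipschitz b ψ' ∧ PeriodicLogLipschitz b χ' ∧
      ∫ x in (0 : ℝ)..1, ψ' x = couplingRate a b * m ∧
      ∫ x in (0 : ℝ)..1, χ' x = couplingRate a b * m ∧
      T.transferLift ψ - T.transferLift χ = ψ' - χ' := by
  set c := Real.exp (-a) * m
  have hc : 0 < c := mul_pos (Real.exp_pos _) (hψm ▸ hψ.integral_pos)
  have uncouple {u : ℝ → ℝ} (hu : PeriodicLogLipschitz b u) (hum : ∫ x in (0 : ℝ)..1, u x = m) :
      PeriodicLogLipschitz b (fun x ↦ T.transferLift u x - (1 - a / b) * c) ∧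
        ∫ x in (0 : ℝ)..1, (T.transferLift u x - (1 - a / b) * c) = couplingRate a b * m := by
    have image := (T.periodicLogLipschitz_transferLift hlam hu).mono hcone
    have mass : ∫ x in (0 : ℝ)..1, T.transferLift u x = m := by
      rw [T.integral_transferLift hlam hu.continuous hu.periodic, hum]
    refine ⟨image.sub_const ha hab hc fun x ↦ ?_, ?_⟩
    · simpa only [mass] using image.exp_neg_mul_integral_le x
    · rw [intervalIntegral.integral_sub (image.intervalIntegrable _ _) (by simp), mass,
        intervalIntegral.integral_const, sub_zero, one_smul, couplingRate]
      ring
  refine ⟨_, _, (uncouple hψ hψm).1, (uncouple hχ hχm).1, (uncouple hψ hψm).2,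
    (uncouple hχ hχm).2, ?_⟩
  ext x
  simp only [Pi.sub_apply, sub_sub_sub_cancel_right]

theorem exists_coupling_transferLiftIter (hlam : 0 < lam) (ha : 0 < a) (hab : a < b)
    (hcone : (b + Astar / lam) / lam ≤ a) {ψ χ : ℝ → ℝ} {m : ℝ} (hψ : PeriodicLogLipschitz b ψ)
    (hχ : PeriodicLogLipschitz b χ) (hψm : ∫ x in (0 : ℝ)..1, ψ x = m)
    (hχm : ∫ x in (0 : ℝ)..1, χ x = m) (n : ℕ) :
    ∃ ψ' χ' : ℝ → ℝ, PeriodicLogLipschitz b ψ' ∧ PeriodicLogLipschitz b χ' ∧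
      ∫ x in (0 : ℝ)..1, ψ' x = couplingRate a b ^ n * m ∧
      ∫ x in (0 : ℝ)..1, χ' x = couplingRate a b ^ n * m ∧
      transferLiftIter Ts n ψ - transferLiftIter Ts n χ = ψ' - χ' := by
  induction n with
  | zero => exact ⟨ψ, χ, hψ, hχ, by simpa using hψm, by simpa using hχm, rfl⟩
  | succ n ih =>
    obtain ⟨ψ₁, χ₁, hψ₁, hχ₁, hψ₁m, hχ₁m, hdiff₁⟩ := ih
    obtain ⟨ψ₂, χ₂, hψ₂, hχ₂, hψ₂m, hχ₂m, hdiff₂⟩ :=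
      (Ts (n + 1)).exists_coupling hlam ha hab hcone hψ₁ hχ₁ hψ₁m hχ₁m
    refine ⟨ψ₂, χ₂, hψ₂, hχ₂, by rw [hψ₂m]; ring, by rw [hχ₂m]; ring, ?_⟩
    simp only [transferLiftIter]
    rw [← CM.transferLift_sub, hdiff₁, CM.transferLift_sub, hdiff₂]

theorem abs_transferLiftIter_sub_le (hlam : 0 < lam) (ha : 0 < a) (hab : a < b)
    (hcone : (b + Astar / lam) / lam ≤ a) {ψ χ : ℝ → ℝ} {m : ℝ} (hψ : PeriodicLogLipschitz b ψ)
    (hχ : PeriodicLogLipschitz b χ) (hψm : ∫ x in (0 : ℝ)..1, ψ x = m)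
    (hχm : ∫ x in (0 : ℝ)..1, χ x = m) (n : ℕ) (x : ℝ) :
    |transferLiftIter Ts n ψ x - transferLiftIter Ts n χ x| ≤
      Real.exp b * (couplingRate a b ^ n * m) := by
  obtain ⟨ψ', χ', hψ', hχ', hψ'm, hχ'm, hdiff⟩ :=
    exists_coupling_transferLiftIter (Ts := Ts) hlam ha hab hcone hψ hχ hψm hχm n
  rw [show transferLiftIter Ts n ψ x - transferLiftIter Ts n χ x = ψ' x - χ' x from
    congrFun hdiff x]
  exact abs_sub_le_of_nonneg_of_le (hψ'.pos x).le (hψ'm ▸ hψ'.le_exp_mul_integral x)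
    (hχ'.pos x).le (hχ'm ▸ hχ'.le_exp_mul_integral x)

theorem abs_integral_mul_sub_integral_mul_le (hlam : 0 < lam) (ha : 0 < a) (hab : a < b)
    (hcone : (b + Astar / lam) / lam ≤ a) {ψ χ φ : ℝ → ℝ} {m : ℝ}
    (hψ : PeriodicLogLipschitz b ψ) (hχ : PeriodicLogLipschitz b χ)
    (hψm : ∫ x in (0 : ℝ)..1, ψ x = m) (hχm : ∫ x in (0 : ℝ)..1, χ x = m)
    (hφ : Continuous φ) (hφper : Function.Periodic φ 1) (n : ℕ) :
    |(∫ x in (0 : ℝ)..1, ψ x * φ (liftIter Ts n x)) -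
        ∫ x in (0 : ℝ)..1, χ x * φ (liftIter Ts n x)| ≤
      Real.exp b * (couplingRate a b ^ n * m) * ∫ x in (0 : ℝ)..1, |φ x| := by
  have hψn := continuous_transferLiftIter Ts hlam hψ.continuous n
  have hχn := continuous_transferLiftIter Ts hlam hχ.continuous n
  rw [integral_mul_comp_liftIter Ts hlam hψ.continuous hψ.periodic hφ hφper,
    integral_mul_comp_liftIter Ts hlam hχ.continuous hχ.periodic hφ hφper,
    ← intervalIntegral.integral_sub (Continuous.intervalIntegrable (by fun_prop) _ _)
      (Continuous.intervalIntegrable (by fun_prop) _ _), ← intervalIntegral.integral_const_mul]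
  refine (intervalIntegral.abs_integral_le_integral_abs zero_le_one).trans <|
    intervalIntegral.integral_mono_on zero_le_one
      (((hψn.mul hφ).sub (hχn.mul hφ)).abs.intervalIntegrable _ _)
      ((continuous_const.mul hφ.abs).intervalIntegrable _ _) fun x _ ↦ ?_
  rw [← sub_mul, abs_mul]
  exact mul_le_mul_of_nonneg_right
    (abs_transferLiftIter_sub_le hlam ha hab hcone hψ hχ hψm hχm n x) (abs_nonneg _)

theorem integral_comp_liftIter_mul_comp_liftIter (hlam : 0 < lam) {h φ : ℝ → ℝ}
    (hh : Continuous h) (hhper : Function.Periodic h 1) (hφ : Continuous φ)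
    (hφper : Function.Periodic φ 1) (k j : ℕ) :
    ∫ x in (0 : ℝ)..1, h (liftIter Ts k x) * φ (liftIter Ts (k + j) x) =
      (∫ x in (0 : ℝ)..1, transferLiftIter Ts k (fun _ ↦ 1) x * (1 + h x) *
          φ (liftIter (fun i ↦ Ts (k + i)) j x)) -
        ∫ x in (0 : ℝ)..1, transferLiftIter Ts k (fun _ ↦ 1) x *
          φ (liftIter (fun i ↦ Ts (k + i)) j x) := by
  have hρ : Continuous (transferLiftIter Ts k fun _ ↦ 1) :=
    continuous_transferLiftIter Ts hlam continuous_const k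
  have hT := continuous_liftIter (fun i ↦ Ts (k + i)) j
  simp only [liftIter_add]
  rw [integral_comp_liftIter Ts hlam (φ := fun y ↦ h y * φ (liftIter (fun i ↦ Ts (k + i)) j y))
    (by fun_prop) (hhper.mul (periodic_comp_liftIter _ hφper j)),
    ← intervalIntegral.integral_sub (Continuous.intervalIntegrable (by fun_prop) _ _)
      (Continuous.intervalIntegrable (by fun_prop) _ _)]
  exact intervalIntegral.integral_congr fun x _ ↦ by ring

theorem abs_integral_mul_comp_liftIter_le (hlam : 0 < lam) (ha : 0 < a) (hab : a < b)
    (hcone : (b + Astar / lam) / lam ≤ a) {h φ : ℝ → ℝ}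
    (hh : PeriodicLogLipschitz (b - a) fun x ↦ 1 + h x) {k : ℕ}
    (hmean : ∫ x in (0 : ℝ)..1, h (liftIter Ts k x) = 0)
    (hφ : Continuous φ) (hφper : Function.Periodic φ 1) (j : ℕ) :
    |∫ x in (0 : ℝ)..1, h (liftIter Ts k x) * φ (liftIter Ts (k + j) x)| ≤
      Real.exp (a + b) * couplingRate a b ^ j *
        ∫ x in (0 : ℝ)..1, |φ (liftIter Ts (k + j) x)| := by
  have hconea : (a + Astar / lam) / lam ≤ a := le_trans (by gcongr) hcone
  have hh_cont : Continuous h := by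
    simpa [Function.comp_def] using (continuous_const_add (-1 : ℝ)).comp hh.continuous
  have hh_per : Function.Periodic h 1 := fun x ↦ add_left_cancel (hh.periodic x)
  set ρ : ℝ → ℝ := transferLiftIter Ts k fun _ ↦ 1
  have hρ : PeriodicLogLipschitz a ρ :=
    periodicLogLipschitz_transferLiftIter hlam hconea (PeriodicLogLipschitz.const ha.le one_pos) k
  have hρ_cont := hρ.continuous
  have hρm : ∫ x in (0 : ℝ)..1, ρ x = 1 := integral_transferLiftIter_one Ts hlam k
  have hu : PeriodicLogLipschitz b fun x ↦ ρ x * (1 + h x) := by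
    simpa only [add_sub_cancel] using hρ.mul hh
  have hum : ∫ x in (0 : ℝ)..1, ρ x * (1 + h x) = 1 := by
    simp only [mul_add, mul_one]
    rw [intervalIntegral.integral_add (hρ.intervalIntegrable _ _)
      (Continuous.intervalIntegrable (by fun_prop) _ _), hρm,
      ← integral_comp_liftIter Ts hlam hh_cont hh_per, hmean, add_zero]
  rw [integral_comp_liftIter_mul_comp_liftIter hlam hh_cont hh_per hφ hφper]
  calc _ ≤ Real.exp b * (couplingRate a b ^ j * 1) * ∫ x in (0 : ℝ)..1, |φ x| :=
        abs_integral_mul_sub_integral_mul_le hlam ha hab hcone hu (hρ.mono hab.le) hum hρm hφ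
          hφper j
    _ ≤ Real.exp b * (couplingRate a b ^ j * 1) *
          (Real.exp a * ∫ x in (0 : ℝ)..1, |φ (liftIter Ts (k + j) x)|) := by
        have := couplingRate_nonneg ha hab
        gcongr
        exact integral_le_exp_mul_integral_comp_liftIter hlam ha.le hconea hφ.abs
          (hφper.comp abs) (fun _ ↦ abs_nonneg _) _
    _ = _ := by rw [Real.exp_add]; ring

end LiftIter

theorem exists_cone_parameters {lam Astar : ℝ} (hlam : 1 < lam) (hA : 0 ≤ Astar) :
    ∃ a b : ℝ, 0 < a ∧ a < b ∧ (b + Astar / lam) / lam ≤ a := by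
  have hgap : 0 < lam - 1 := sub_pos.2 hlam
  have hlam_pos : 0 < lam := one_pos.trans hlam
  refine ⟨2 * (Astar / lam) / (lam - 1) + 1, (2 * (Astar / lam) / (lam - 1) + 1) * ((lam + 1) / 2),
    by positivity, lt_mul_of_one_lt_right (by positivity) (by linarith), ?_⟩
  rw [div_le_iff₀ hlam_pos]
  have : 2 * (Astar / lam) / (lam - 1) * (lam - 1) = 2 * (Astar / lam) := div_mul_cancel₀ _ hgap.ne'
  linarith

theorem exists_exponential_mixing {lam Astar : ℝ} (hlam : 1 < lam) (hA : 0 ≤ Astar) {K B : ℝ}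
    (hK : 0 ≤ K) (hB : 0 < B) :
    ∃ C θ : ℝ, 0 ≤ C ∧ 0 ≤ θ ∧ θ < 1 ∧ ∀ (Ts : ℕ → CM lam Astar) (k j : ℕ) (g φ : ℝ → ℝ),
      Function.Periodic g 1 → (∀ x y, |g x - g y| ≤ K * |x - y|) → (∀ x, |g x| ≤ B) →
      ∫ x in (0 : ℝ)..1, g (liftIter Ts k x) = 0 → Continuous φ → Function.Periodic φ 1 →
      |∫ x in (0 : ℝ)..1, g (liftIter Ts k x) * φ (liftIter Ts (k + j) x)| ≤
        C * θ ^ j * ∫ x in (0 : ℝ)..1, |φ (liftIter Ts (k + j) x)| := by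
  have hlam_pos : 0 < lam := one_pos.trans hlam
  obtain ⟨a, b, ha, hab, hcone⟩ := exists_cone_parameters hlam hA
  have hgap : 0 < b - a := sub_pos.2 hab
  obtain ⟨M, hM, hBM, hKM⟩ : ∃ M : ℝ, 0 < M ∧ 2 * B ≤ M ∧ 2 * K / M ≤ b - a := by
    refine ⟨2 * B + 2 * K / (b - a), by positivity,
      le_add_of_nonneg_right (div_nonneg (by positivity) hgap.le), ?_⟩
    rw [div_le_iff₀ (by positivity), mul_add, mul_div_cancel₀ _ hgap.ne']
    linarith [mul_pos hgap hB]
  refine ⟨M * Real.exp (a + b), couplingRate a b, by positivity, couplingRate_nonneg ha hab,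
    couplingRate_lt_one ha hab, fun Ts k j g φ hg hgK hgB hmean hφ hφper ↦ ?_⟩
  have hcone_g : PeriodicLogLipschitz (b - a) fun x ↦ 1 + M⁻¹ * g x := by
    refine (PeriodicLogLipschitz.of_lipschitz (K := K / M) one_half_pos
      (fun x ↦ by simp only [hg x]) (fun x ↦ ?_) fun x y ↦ ?_).mono (le_of_eq_of_le (by ring) hKM)
    · have : -(1 / 2) ≤ g x / M := by
        rw [le_div_iff₀ hM]
        linarith [(abs_le.1 (hgB x)).1]
      rw [inv_mul_eq_div]
      linarith
    · rw [add_sub_add_left_eq_sub, ← mul_sub, inv_mul_eq_div, div_mul_eq_mul_div]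
      exact div_le_div_of_nonneg_right ((le_abs_self _).trans (hgK x y)) hM.le
  have scaled := abs_integral_mul_comp_liftIter_le (Ts := Ts) (k := k) hlam_pos ha hab hcone
    hcone_g (by rw [intervalIntegral.integral_const_mul, hmean, mul_zero]) hφ hφper j
  simp only [mul_assoc M⁻¹] at scaled
  rw [intervalIntegral.integral_const_mul, abs_mul, abs_of_pos (inv_pos.2 hM),
    inv_mul_le_iff₀ hM] at scaled
  linarith

/-! ### Fourth moments of reverse mixing sequences -/

theorem add_sq_le_of_abs_le {x s b : ℝ} (hx : |x| ≤ b) :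
    (x + s) ^ 2 ≤ s ^ 2 + 2 * (x * s) + b ^ 2 := by
  have := sq_le_sq.2 (hx.trans (le_abs_self b))
  linarith

theorem abs_add_pow_three_sub_pow_three_le {x s b : ℝ} (hx : |x| ≤ b) :
    |(x + s) ^ 3 - s ^ 3| ≤ 5 * b * (s ^ 2 + b ^ 2) := by
  have hx2 : x ^ 2 ≤ b ^ 2 := sq_le_sq.2 (hx.trans (le_abs_self b))
  have quotient_le : |x ^ 2 + 3 * (x * s) + 3 * s ^ 2| ≤ 5 * (s ^ 2 + b ^ 2) := by
    rw [abs_le]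
    constructor <;> linarith [sq_nonneg (x + s), sq_nonneg (x - s), sq_nonneg s, sq_nonneg b]
  calc |(x + s) ^ 3 - s ^ 3| = |x| * |x ^ 2 + 3 * (x * s) + 3 * s ^ 2| := by
        rw [← abs_mul]
        ring_nf
    _ ≤ b * (5 * (s ^ 2 + b ^ 2)) :=
        mul_le_mul hx quotient_le (abs_nonneg _) ((abs_nonneg x).trans hx)
    _ = 5 * b * (s ^ 2 + b ^ 2) := by ring

theorem add_pow_four_le_of_abs_le {x s b : ℝ} (hx : |x| ≤ b) :
    (x + s) ^ 4 ≤ s ^ 4 + 4 * (x * s ^ 3) + 8 * b ^ 2 * s ^ 2 + 3 * b ^ 4 := by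
  have hx2 : x ^ 2 ≤ b ^ 2 := sq_le_sq.2 (hx.trans (le_abs_self b))
  have hx4 : x ^ 4 ≤ b ^ 4 := by
    simpa only [← pow_mul] using pow_le_pow_left₀ (sq_nonneg x) hx2 2
  have cubic : 4 * (x ^ 3 * s) ≤ 2 * (x ^ 2 * s ^ 2) + 2 * x ^ 4 := by
    linarith [sq_nonneg (x * (x - s))]
  linarith [mul_le_mul_of_nonneg_right hx2 (sq_nonneg s)]

theorem expect_sq_nonneg {Ω : Type*} [TopologicalSpace Ω] (E : C(Ω, ℝ) →ₚ[ℝ] ℝ) (Φ : C(Ω, ℝ)) :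
    0 ≤ E (Φ ^ 2) :=
  E.map_nonneg <| ContinuousMap.le_def.2 fun ω ↦ sq_nonneg (Φ ω)

theorem le_mul_sum_range_of_le_add {u w : ℕ → ℝ} {N : ℕ} {D : ℝ} (hD : 0 ≤ D) (hw : ∀ i, 0 ≤ w i)
    (hN : u N = 0) (h : ∀ k < N, u k ≤ u (k + 1) + D * w k) {k : ℕ} (hk : k ≤ N) :
    u k ≤ D * ∑ i ∈ Finset.range N, w i := by
  have telescope : ∑ i ∈ Finset.Ico k N, (u i - u (i + 1)) = u k := by
    rw [← neg_inj, ← Finset.sum_neg_distrib]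
    simp only [neg_sub]
    rw [Finset.sum_Ico_sub u hk, hN, zero_sub]
  rw [← telescope, Finset.mul_sum]
  refine (Finset.sum_le_sum fun i hi ↦ ?_).trans (Finset.sum_le_sum_of_subset_of_nonneg
    (fun i hi ↦ Finset.mem_range.2 (Finset.mem_Ico.1 hi).2) fun i _ _ ↦ mul_nonneg hD (hw i))
  linarith [h i (Finset.mem_Ico.1 hi).2]

/-- Bounded observables `X k` that are decorrelated, at the rate `α`, from the observables of the
distant future: `E` is the expectation, and `𝒜 i` is the algebra of observables that depend only
on the state at time `i`. -/
structure IsReverseMixing {Ω : Type*} [TopologicalSpace Ω] (E : C(Ω, ℝ) →ₚ[ℝ] ℝ)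
    (𝒜 : ℕ → Subalgebra ℝ C(Ω, ℝ)) (X : ℕ → C(Ω, ℝ)) (b α : ℕ → ℝ) : Prop where
  expect_one : E 1 = 1
  antitone : Antitone 𝒜
  mem : ∀ k, X k ∈ 𝒜 k
  abs_apply_le : ∀ k ω, |X k ω| ≤ b k
  rate_nonneg : ∀ j, 0 ≤ α j
  summable_rate : Summable α
  abs_expect_mul_le : ∀ k j, ∀ Φ ∈ 𝒜 (k + j), |E (X k * Φ)| ≤ b k * α j * E |Φ|

/-- The sum `X k + ⋯ + X (N - 1)`. -/
def tailSum {M : Type*} [AddCommMonoid M] (X : ℕ → M) (N k : ℕ) : M := ∑ i ∈ Finset.Ico k N, X i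

theorem tailSum_self {M : Type*} [AddCommMonoid M] (X : ℕ → M) (N : ℕ) : tailSum X N N = 0 := by
  rw [tailSum, Finset.Ico_self, Finset.sum_empty]

theorem tailSum_eq_add {M : Type*} [AddCommMonoid M] (X : ℕ → M) {N k : ℕ} (hk : k < N) :
    tailSum X N k = X k + tailSum X N (k + 1) :=
  Finset.sum_eq_sum_Ico_succ_bot hk X

namespace IsReverseMixing

variable {Ω : Type*} [TopologicalSpace Ω] {E : C(Ω, ℝ) →ₚ[ℝ] ℝ} {𝒜 : ℕ → Subalgebra ℝ C(Ω, ℝ)}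
  {X : ℕ → C(Ω, ℝ)} {b α : ℕ → ℝ} {B : ℝ} {N k : ℕ}

theorem smul (h : IsReverseMixing E 𝒜 X b α) {c : ℕ → ℝ} (hc : ∀ k, 0 ≤ c k) :
    IsReverseMixing E 𝒜 (fun k ↦ c k • X k) (fun k ↦ c k * b k) α where
  expect_one := h.expect_one
  antitone := h.antitone
  mem k := Subalgebra.smul_mem _ (h.mem k) _
  abs_apply_le k ω := by
    rw [ContinuousMap.smul_apply, smul_eq_mul, abs_mul, abs_of_nonneg (hc k)]
    exact mul_le_mul_of_nonneg_left (h.abs_apply_le k ω) (hc k)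
  rate_nonneg := h.rate_nonneg
  summable_rate := h.summable_rate
  abs_expect_mul_le k j Φ hΦ := by
    rw [smul_mul_assoc, map_smul, smul_eq_mul, abs_mul, abs_of_nonneg (hc k), mul_assoc, mul_assoc,
      ← mul_assoc (b k)]
    exact mul_le_mul_of_nonneg_left (h.abs_expect_mul_le k j Φ hΦ) (hc k)

theorem expect_abs_le (h : IsReverseMixing E 𝒜 X b α) (k : ℕ) : E |X k| ≤ b k := by
  have bound : |X k| ≤ b k • (1 : C(Ω, ℝ)) :=
    ContinuousMap.le_def.2 fun ω ↦ by simpa using h.abs_apply_le k ω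
  simpa [h.expect_one] using OrderHomClass.mono E bound

theorem bound_nonneg (h : IsReverseMixing E 𝒜 X b α) (k : ℕ) : 0 ≤ b k :=
  (E.map_nonneg (abs_nonneg _)).trans (h.expect_abs_le k)

theorem bound_le_sum (h : IsReverseMixing E 𝒜 X b α) (hk : k < N) :
    b k ≤ ∑ i ∈ Finset.range N, b i :=
  Finset.single_le_sum (fun i _ ↦ h.bound_nonneg i) (Finset.mem_range.2 hk)

theorem tailSum_mem (h : IsReverseMixing E 𝒜 X b α) (N k : ℕ) : tailSum X N k ∈ 𝒜 k :=
  sum_mem fun i hi ↦ h.antitone (Finset.mem_Ico.1 hi).1 (h.mem i)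

/-- `Y (k + 1)` is split into its increments `Y i - Y (i + 1)`, which belong to `𝒜 i`. -/
theorem abs_expect_mul_succ_le (h : IsReverseMixing E 𝒜 X b α) {Y : ℕ → C(Ω, ℝ)} {M : ℝ}
    (hY : ∀ i, Y i ∈ 𝒜 i) (hYN : Y N = 0) (hM : ∀ i < N, E |Y i - Y (i + 1)| ≤ M) (hk : k < N) :
    |E (X k * Y (k + 1))| ≤ b k * (∑' j, α j) * M := by
  obtain ⟨n, rfl⟩ := Nat.exists_eq_add_of_lt hk
  have hM_nonneg : 0 ≤ M := (E.map_nonneg (abs_nonneg _)).trans (hM k hk)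
  have increments : Y (k + 1) =
      ∑ j ∈ Finset.range n, (Y (k + (j + 1)) - Y (k + (j + 1 + 1))) := by
    rw [Finset.sum_range_sub' (fun j ↦ Y (k + (j + 1))), ← add_assoc k n 1, hYN, sub_zero, zero_add]
  have increment_bound (j : ℕ) (hj : j ∈ Finset.range n) :
      |E (X k * (Y (k + (j + 1)) - Y (k + (j + 1 + 1))))| ≤ b k * α (j + 1) * M := by
    refine (h.abs_expect_mul_le k (j + 1) _ <|
      sub_mem (hY _) (h.antitone (Nat.le_succ _) (hY _))).trans ?_
    exact mul_le_mul_of_nonneg_left (hM _ (by have := Finset.mem_range.1 hj; omega))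
      (mul_nonneg (h.bound_nonneg k) (h.rate_nonneg _))
  have rate_sum : ∑ j ∈ Finset.range n, α (j + 1) ≤ ∑' j, α j := by
    have := h.summable_rate.sum_le_tsum (Finset.range (n + 1)) fun j _ ↦ h.rate_nonneg j
    rw [Finset.sum_range_succ'] at this
    linarith [h.rate_nonneg 0]
  calc |E (X k * Y (k + 1))|
      ≤ ∑ j ∈ Finset.range n, b k * α (j + 1) * M := by
        rw [increments, Finset.mul_sum, map_sum]
        exact (Finset.abs_sum_le_sum_abs _ _).trans (Finset.sum_le_sum increment_bound)
    _ = b k * (∑ j ∈ Finset.range n, α (j + 1)) * M := by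
        rw [← Finset.sum_mul, ← Finset.mul_sum]
    _ ≤ b k * (∑' j, α j) * M := by
        have := h.bound_nonneg k
        gcongr

theorem expect_tailSum_sq_le (h : IsReverseMixing E 𝒜 X b α) (hB : ∀ i, b i ≤ B) (hk : k ≤ N) :
    E (tailSum X N k ^ 2) ≤ B * (1 + 2 * ∑' j, α j) * ∑ i ∈ Finset.range N, b i := by
  have hA : 0 ≤ ∑' j, α j := tsum_nonneg h.rate_nonneg
  have hB_nonneg : 0 ≤ B := (h.bound_nonneg 0).trans (hB 0)
  refine le_mul_sum_range_of_le_add (u := fun k ↦ E (tailSum X N k ^ 2)) (by positivity)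
    h.bound_nonneg (by simp [tailSum_self]) (fun k hk ↦ ?_) hk
  have correlation : |E (X k * tailSum X N (k + 1))| ≤ b k * (∑' j, α j) * B := by
    refine h.abs_expect_mul_succ_le (h.tailSum_mem N) (tailSum_self X N) (fun i hi ↦ ?_) hk
    rw [tailSum_eq_add X hi, add_sub_cancel_right]
    exact (h.expect_abs_le i).trans (hB i)
  have pointwise : tailSum X N k ^ 2 ≤ tailSum X N (k + 1) ^ 2 +
      (2 : ℝ) • (X k * tailSum X N (k + 1)) + b k ^ 2 • (1 : C(Ω, ℝ)) :=
    ContinuousMap.le_def.2 fun ω ↦ by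
      simpa [tailSum_eq_add X hk] using add_sq_le_of_abs_le (h.abs_apply_le k ω)
  have expected := OrderHomClass.mono E pointwise
  simp only [map_add, map_smul, smul_eq_mul, h.expect_one] at expected
  linarith [le_of_abs_le correlation, mul_le_mul_of_nonneg_left (hB k) (h.bound_nonneg k)]

theorem expect_abs_tailSum_pow_three_sub_le (h : IsReverseMixing E 𝒜 X b α) (hB : ∀ i, b i ≤ B)
    (hk : k < N) :
    E |tailSum X N k ^ 3 - tailSum X N (k + 1) ^ 3| ≤
      10 * B ^ 2 * (1 + ∑' j, α j) * ∑ i ∈ Finset.range N, b i := by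
  set W := ∑ i ∈ Finset.range N, b i
  have hb := h.bound_nonneg k
  have hB_nonneg : 0 ≤ B := hb.trans (hB k)
  have second_moment := h.expect_tailSum_sq_le hB (Nat.succ_le_of_lt hk)
  have pointwise : |tailSum X N k ^ 3 - tailSum X N (k + 1) ^ 3| ≤
      (5 * b k) • (tailSum X N (k + 1) ^ 2 + b k ^ 2 • (1 : C(Ω, ℝ))) :=
    ContinuousMap.le_def.2 fun ω ↦ by
      simpa [tailSum_eq_add X hk, mul_add] using
        abs_add_pow_three_sub_pow_three_le (s := tailSum X N (k + 1) ω) (h.abs_apply_le k ω)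
  have expected := OrderHomClass.mono E pointwise
  simp only [map_add, map_smul, smul_eq_mul, h.expect_one, mul_one] at expected
  calc _ ≤ 5 * b k * (E (tailSum X N (k + 1) ^ 2) + b k ^ 2) := expected
    _ ≤ 5 * B * (B * (1 + 2 * ∑' j, α j) * W + B * W) := by
        rw [sq (b k)]
        gcongr
        exacts [add_nonneg (expect_sq_nonneg _ _) (mul_self_nonneg _), hB k, hB k,
          h.bound_le_sum hk]
    _ = _ := by ring

theorem expect_sum_pow_four_le (h : IsReverseMixing E 𝒜 X b α) (hB : ∀ i, b i ≤ B) (N : ℕ) :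
    E ((∑ i ∈ Finset.range N, X i) ^ 4) ≤
      56 * (B * (1 + ∑' j, α j) * ∑ i ∈ Finset.range N, b i) ^ 2 := by
  set A := ∑' j, α j
  set W := ∑ i ∈ Finset.range N, b i
  have hA : 0 ≤ A := tsum_nonneg h.rate_nonneg
  have hB_nonneg : 0 ≤ B := (h.bound_nonneg 0).trans (hB 0)
  have hW : 0 ≤ W := Finset.sum_nonneg fun i _ ↦ h.bound_nonneg i
  have step (k : ℕ) (hk : k < N) : E (tailSum X N k ^ 4) ≤
      E (tailSum X N (k + 1) ^ 4) + 56 * (B * (1 + A)) ^ 2 * W * b k := by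
    have hb := h.bound_nonneg k
    have correlation : |E (X k * tailSum X N (k + 1) ^ 3)| ≤
        b k * A * (10 * B ^ 2 * (1 + A) * W) :=
      h.abs_expect_mul_succ_le (fun i ↦ pow_mem (h.tailSum_mem N i) 3) (by simp [tailSum_self])
        (fun i hi ↦ h.expect_abs_tailSum_pow_three_sub_le hB hi) hk
    have quadratic : b k ^ 2 * E (tailSum X N (k + 1) ^ 2) ≤
        b k * B * (B * (1 + 2 * A) * W) := by
      rw [sq (b k)]
      gcongr
      exacts [expect_sq_nonneg _ _, hB k, h.expect_tailSum_sq_le hB hk]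
    have quartic : b k ^ 4 ≤ b k * B ^ 2 * W := by
      calc b k ^ 4 = b k * b k ^ 2 * b k := by ring
        _ ≤ b k * B ^ 2 * W := by
          gcongr
          exacts [hB k, h.bound_le_sum hk]
    have pointwise : tailSum X N k ^ 4 ≤ tailSum X N (k + 1) ^ 4 +
        (4 : ℝ) • (X k * tailSum X N (k + 1) ^ 3) +
        (8 * b k ^ 2) • tailSum X N (k + 1) ^ 2 + (3 * b k ^ 4) • (1 : C(Ω, ℝ)) :=
      ContinuousMap.le_def.2 fun ω ↦ by
        simpa [tailSum_eq_add X hk] using add_pow_four_le_of_abs_le (h.abs_apply_le k ω)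
    have expected := OrderHomClass.mono E pointwise
    simp only [map_add, map_smul, smul_eq_mul, h.expect_one, mul_one] at expected
    have slack : 0 ≤ b k * B ^ 2 * W * (16 * A ^ 2 + 56 * A + 45) := by positivity
    linarith [le_of_abs_le correlation]
  have total := le_mul_sum_range_of_le_add (u := fun k ↦ E (tailSum X N k ^ 4)) (by positivity)
    h.bound_nonneg (by simp [tailSum_self]) step (Nat.zero_le N)
  rw [tailSum, ← Finset.range_eq_Ico] at total
  exact total.trans_eq (by ring)

end IsReverseMixing

/-! ### Dynamics and integration on the circle -/

theorem integrable_of_continuous {Ω E : Type*} [TopologicalSpace Ω] [CompactSpace Ω]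
    [MeasurableSpace Ω] [OpensMeasurableSpace Ω] [NormedAddCommGroup E] (μ : Measure Ω)
    [IsFiniteMeasureOnCompacts μ] {f : Ω → E} (hf : Continuous f) : Integrable f μ :=
  hf.integrable_of_hasCompactSupport (HasCompactSupport.of_compactSpace f)

/-- Integration against `μ`, as a positive functional on the continuous functions. -/
noncomputable def expectation {Ω : Type*} [TopologicalSpace Ω] [CompactSpace Ω] [MeasurableSpace Ω]
    [OpensMeasurableSpace Ω] (μ : Measure Ω) [IsFiniteMeasureOnCompacts μ] : C(Ω, ℝ) →ₚ[ℝ] ℝ :=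
  PositiveLinearMap.mk₀
    { toFun := fun Φ ↦ ∫ ω, Φ ω ∂μ
      map_add' := fun Φ Ψ ↦ integral_add (integrable_of_continuous μ Φ.continuous)
        (integrable_of_continuous μ Ψ.continuous)
      map_smul' := fun c Φ ↦ integral_const_mul c Φ }
    fun _ hΦ ↦ integral_nonneg (ContinuousMap.le_def.1 hΦ)

theorem expectation_apply {Ω : Type*} [TopologicalSpace Ω] [CompactSpace Ω] [MeasurableSpace Ω]
    [OpensMeasurableSpace Ω] (μ : Measure Ω) [IsFiniteMeasureOnCompacts μ] (Φ : C(Ω, ℝ)) :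
    expectation μ Φ = ∫ ω, Φ ω ∂μ := rfl

instance : IsProbabilityMeasure (volume : Measure Circle1) :=
  ⟨by rw [AddCircle.measure_univ, ENNReal.ofReal_one]⟩

theorem integral_circle1 (h : Circle1 → ℝ) : ∫ x : Circle1, h x = ∫ t in (0 : ℝ)..1, h t := by
  rw [← AddCircle.intervalIntegral_preimage 1 0 h, zero_add]

theorem periodic_comp_coe_circle1 {α : Type*} (g : Circle1 → α) :
    Function.Periodic (fun t : ℝ ↦ g t) 1 := fun t ↦ congrArg g (AddCircle.coe_add_period 1 t)

theorem dist_coe_circle1_le (x y : ℝ) : dist (x : Circle1) y ≤ |x - y| := by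
  rw [dist_eq_norm, ← AddCircle.coe_sub, AddCircle.norm_eq]
  simpa using round_le (x - y) 0

namespace CM

variable {lam Astar : ℝ} (T : CM lam Astar)

theorem periodic_coe_lift : Function.Periodic (fun t ↦ (T.F t : Circle1)) 1 :=
  T.periodic_comp_lift (AddCircle.coe_add_period 1)

theorem toMap_coe (t : ℝ) : T.toMap t = T.F t := by
  have representative : (AddCircle.equivIco 1 0 (t : Circle1) : ℝ) = t - ⌊t⌋ * 1 := by
    rw [AddCircle.coe_equivIco_mk_apply, div_one, mul_one, mul_one, Int.self_sub_floor]
  rw [toMap, representative]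
  exact T.periodic_coe_lift.sub_int_mul_eq ⌊t⌋

theorem continuous_toMap : Continuous T.toMap := by
  have lifted : T.toMap ∘ (QuotientAddGroup.mk : ℝ → Circle1) = fun t ↦ (T.F t : Circle1) :=
    funext T.toMap_coe
  rw [(QuotientAddGroup.isQuotientMap_mk (AddSubgroup.zmultiples (1 : ℝ))).continuous_iff, lifted]
  exact (AddCircle.continuous_mk' 1).comp T.continuous_lift

end CM

section Array

variable {lam Astar : ℝ} (Tarr : ℕ → ℕ → CM lam Astar) (n k : ℕ)

theorem arrIter_coe (t : ℝ) : arrIter Tarr n k t = liftIter (Tarr n) k t := by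
  induction k with
  | zero => rfl
  | succ k ih => rw [arrIter, Function.comp_apply, ih, CM.toMap_coe, liftIter, Function.comp_apply]

theorem continuous_arrIter : Continuous (arrIter Tarr n k) := by
  induction k with
  | zero => exact continuous_id
  | succ k ih => exact (Tarr n (k + 1)).continuous_toMap.comp ih

theorem continuous_fnk {f : Circle1 → ℝ} (hf : Continuous f) : Continuous (fnk Tarr f n k) :=
  hf.comp (continuous_arrIter Tarr n k)

/-- The observables of the circle that depend only on the state at time `k` of the `n`-th row. -/
noncomputable def observablesAt : Subalgebra ℝ C(Circle1, ℝ) :=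
  (ContinuousMap.compRightAlgHom ℝ ℝ ⟨arrIter Tarr n k, continuous_arrIter Tarr n k⟩).range

theorem mem_observablesAt {Φ : C(Circle1, ℝ)} :
    Φ ∈ observablesAt Tarr n k ↔ ∃ φ : C(Circle1, ℝ), ∀ x, Φ x = φ (arrIter Tarr n k x) := by
  simp only [observablesAt, AlgHom.mem_range, ContinuousMap.ext_iff, eq_comm,
    ContinuousMap.compRightAlgHom_apply, ContinuousMap.comp_apply, ContinuousMap.coe_mk]

theorem antitone_observablesAt : Antitone (observablesAt Tarr n) := by
  refine antitone_nat_of_succ_le fun k Φ hΦ ↦ ?_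
  obtain ⟨φ, hφ⟩ := (mem_observablesAt Tarr n (k + 1)).1 hΦ
  exact (mem_observablesAt Tarr n k).2
    ⟨φ.comp ⟨_, (Tarr n (k + 1)).continuous_toMap⟩, hφ⟩

/-- The observable `f` at time `k`, centred with respect to the Haar measure. -/
noncomputable def centredObservable (f : C(Circle1, ℝ)) : C(Circle1, ℝ) where
  toFun x := fnk Tarr f n k x - ∫ y : Circle1, fnk Tarr f n k y
  continuous_toFun := (continuous_fnk Tarr n k f.continuous).sub continuous_const

theorem centredObservable_mem (f : C(Circle1, ℝ)) :
    centredObservable Tarr n k f ∈ observablesAt Tarr n k :=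
  (mem_observablesAt Tarr n k).2
    ⟨f - ContinuousMap.const _ (∫ y : Circle1, fnk Tarr f n k y), fun _ ↦ rfl⟩

theorem centredObservable_coe (f : C(Circle1, ℝ)) (t : ℝ) : centredObservable Tarr n k f t =
    f (liftIter (Tarr n) k t : ℝ) - ∫ y : Circle1, fnk Tarr f n k y := by
  rw [← arrIter_coe]
  rfl

theorem integral_centredObservable (f : C(Circle1, ℝ)) :
    ∫ x : Circle1, centredObservable Tarr n k f x = 0 := by
  simp only [centredObservable, ContinuousMap.coe_mk]
  rw [integral_sub (integrable_of_continuous _ (continuous_fnk Tarr n k f.continuous))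
    (integrable_const _), integral_const, probReal_univ, one_smul, sub_self]

theorem abs_integral_fnk_le {f : Circle1 → ℝ} {B : ℝ} (hB : ∀ x, |f x| ≤ B) :
    |∫ x : Circle1, fnk Tarr f n k x| ≤ B := by
  simpa using norm_integral_le_of_norm_le_const (μ := (volume : Measure Circle1))
    (f := fnk Tarr f n k) (Eventually.of_forall fun x ↦ hB (arrIter Tarr n k x))

end Array

theorem exists_isReverseMixing_centredObservable {lam Astar : ℝ} (hlam : 1 < lam) (hA : 0 ≤ Astar)
    (f : C(Circle1, ℝ)) {K : NNReal} (hf : LipschitzWith K f) :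
    ∃ B α, 0 < B ∧ ∀ (Tarr : ℕ → ℕ → CM lam Astar) (n : ℕ),
      IsReverseMixing (expectation volume) (observablesAt Tarr n)
        (fun k ↦ centredObservable Tarr n k f) (fun _ ↦ B) α := by
  have hB : 0 < 2 * ‖f‖ + 1 := by positivity
  have abs_sub_mean_le (Tarr : ℕ → ℕ → CM lam Astar) (n k : ℕ) (x : Circle1) :
      |f x - ∫ y : Circle1, fnk Tarr f n k y| ≤ 2 * ‖f‖ + 1 := by
    linarith [abs_sub (f x) (∫ y : Circle1, fnk Tarr f n k y), f.norm_coe_le_norm x,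
      abs_integral_fnk_le Tarr n k f.norm_coe_le_norm, Real.norm_eq_abs (f x)]
  obtain ⟨C, θ, hC, hθ, hθ_lt, mixing⟩ := exists_exponential_mixing hlam hA K.2 hB
  refine ⟨2 * ‖f‖ + 1, fun j ↦ C / (2 * ‖f‖ + 1) * θ ^ j, hB, fun Tarr n ↦
    { expect_one := by simp [expectation_apply]
      antitone := antitone_observablesAt Tarr n
      mem := fun k ↦ centredObservable_mem Tarr n k f
      abs_apply_le := fun k x ↦ abs_sub_mean_le Tarr n k (arrIter Tarr n k x)
      rate_nonneg := fun j ↦ by positivity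
      summable_rate := (summable_geometric_of_lt_one hθ hθ_lt).mul_left _
      abs_expect_mul_le := fun k j Φ hΦ ↦ ?_ }⟩
  obtain ⟨φ, hφ⟩ := (mem_observablesAt Tarr n (k + j)).1 hΦ
  have mean_zero := integral_centredObservable Tarr n k f
  rw [integral_circle1] at mean_zero
  simp only [centredObservable_coe] at mean_zero
  have decorrelation := mixing (Tarr n) k j
    (fun t ↦ f t - ∫ y : Circle1, fnk Tarr f n k y) (fun t ↦ φ t)
    (periodic_comp_coe_circle1 fun x ↦ f x - ∫ y : Circle1, fnk Tarr f n k y)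
    (fun x y ↦ by
      rw [sub_sub_sub_cancel_right, ← Real.dist_eq]
      exact (hf.dist_le_mul _ _).trans (mul_le_mul_of_nonneg_left (dist_coe_circle1_le x y) K.2))
    (fun t ↦ abs_sub_mean_le Tarr n k t) mean_zero
    (φ.continuous.comp (AddCircle.continuous_mk' 1)) (periodic_comp_coe_circle1 φ)
  rw [← mul_assoc (2 * ‖f‖ + 1), mul_div_cancel₀ _ hB.ne']
  simpa only [expectation_apply, integral_circle1, ContinuousMap.mul_apply, ContinuousMap.abs_apply,
    centredObservable_coe, hφ, arrIter_coe] using decorrelation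

theorem exists_integral_weighted_sum_pow_four_le {lam Astar : ℝ} (hlam : 1 < lam) (hA : 0 ≤ Astar)
    {f : Circle1 → ℝ} {K : NNReal} (hf : LipschitzWith K f) :
    ∃ D : ℝ, 0 ≤ D ∧ ∀ (Tarr : ℕ → ℕ → CM lam Astar) (n N : ℕ) (c : ℕ → ℝ),
      (∀ k, 0 ≤ c k) → (∀ k, c k ≤ 1) →
      ∫ x : Circle1, (∑ k ∈ Finset.range N,
        c k * (fnk Tarr f n k x - ∫ y : Circle1, fnk Tarr f n k y)) ^ 4 ≤
          D * (∑ k ∈ Finset.range N, c k) ^ 2 := by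
  obtain ⟨B, α, hB, mixing⟩ :=
    exists_isReverseMixing_centredObservable hlam hA ⟨f, hf.continuous⟩ hf
  refine ⟨56 * (B * (1 + ∑' j, α j) * B) ^ 2, by positivity, fun Tarr n N c hc hc_le ↦ ?_⟩
  have moment := ((mixing Tarr n).smul hc).expect_sum_pow_four_le
    (fun k ↦ mul_le_of_le_one_left hB.le (hc_le k)) N
  simp only [expectation_apply, ContinuousMap.pow_apply, ContinuousMap.sum_apply,
    ContinuousMap.smul_apply, smul_eq_mul, ← Finset.sum_mul] at moment
  exact moment.trans_eq (by ring)

/-! ### The path process -/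

/-- The continuous cutoff of `s` to `[0, 1]`, so that `⌊s⌋₊` and `Int.fract s` can be recovered
from the values `ramp (s - k)`, `k : ℕ`. -/
noncomputable def ramp (s : ℝ) : ℝ := max 0 (min 1 s)

theorem ramp_nonneg (s : ℝ) : 0 ≤ ramp s := le_max_left _ _

theorem ramp_le_one (s : ℝ) : ramp s ≤ 1 := max_le zero_le_one (min_le_left _ _)

theorem ramp_of_nonpos {s : ℝ} (hs : s ≤ 0) : ramp s = 0 := max_eq_left (min_le_of_right_le hs)

theorem ramp_of_one_le {s : ℝ} (hs : 1 ≤ s) : ramp s = 1 := by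
  rw [ramp, min_eq_left hs, max_eq_right zero_le_one]

theorem ramp_of_mem_Icc {s : ℝ} (hs : s ∈ Icc (0 : ℝ) 1) : ramp s = s := by
  rw [ramp, min_eq_right hs.2, max_eq_right hs.1]

theorem monotone_ramp : Monotone ramp := fun _ _ h ↦ by unfold ramp; gcongr

theorem continuous_ramp : Continuous ramp := by unfold ramp; fun_prop

theorem sum_range_floor_add_fract_mul {N : ℕ} {s : ℝ} (hs : s ∈ Icc (0 : ℝ) N) (u : ℕ → ℝ) :
    ∑ k ∈ Finset.range ⌊s⌋₊, u k + Int.fract s * u ⌊s⌋₊ =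
      ∑ k ∈ Finset.range (N + 1), ramp (s - k) * u k := by
  have floor_le : (⌊s⌋₊ : ℝ) ≤ s := Nat.floor_le hs.1
  have lt_floor : s < ⌊s⌋₊ + 1 := Nat.lt_floor_add_one s
  have floor_le_N : ⌊s⌋₊ ≤ N := Nat.cast_le.1 (floor_le.trans hs.2)
  have beyond (k : ℕ) (_ : k ∈ Finset.range (N + 1)) (hk : k ∉ Finset.range (⌊s⌋₊ + 1)) :
      ramp (s - k) * u k = 0 := by
    have : (⌊s⌋₊ : ℝ) + 1 ≤ k := by exact_mod_cast not_lt.1 (Finset.mem_range.not.1 hk)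
    rw [ramp_of_nonpos (by linarith), zero_mul]
  rw [← Finset.sum_subset (Finset.range_mono (Nat.succ_le_succ floor_le_N)) beyond,
    Finset.sum_range_succ]
  congr 1
  · refine Finset.sum_congr rfl fun k hk ↦ ?_
    have : (k : ℝ) + 1 ≤ ⌊s⌋₊ := by exact_mod_cast Finset.mem_range.1 hk
    rw [ramp_of_one_le (by linarith), one_mul]
  · rw [ramp_of_mem_Icc ⟨by linarith, by linarith⟩, Int.fract, natCast_floor_eq_intCast_floor hs.1]

theorem sum_ramp {N : ℕ} {s : ℝ} (hs : s ∈ Icc (0 : ℝ) N) :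
    ∑ k ∈ Finset.range (N + 1), ramp (s - k) = s := by
  have sum_one := sum_range_floor_add_fract_mul hs 1
  simp only [Pi.one_apply, mul_one, Finset.sum_const, Finset.card_range, nsmul_eq_mul] at sum_one
  rw [← sum_one, natCast_floor_eq_intCast_floor hs.1, Int.floor_add_fract]

theorem natCast_mul_mem_Icc (n : ℕ) {t : ℝ} (ht : t ∈ Icc (0 : ℝ) 1) :
    n * t ∈ Icc (0 : ℝ) n :=
  ⟨mul_nonneg n.cast_nonneg ht.1, mul_le_of_le_one_right n.cast_nonneg ht.2⟩

section

variable {lam Astar : ℝ} (Tarr : ℕ → ℕ → CM lam Astar) {f : Circle1 → ℝ} (n : ℕ)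

theorem zetaP_eq_sum_ramp (f : Circle1 → ℝ) {t : ℝ} (ht : t ∈ Icc (0 : ℝ) 1) (x : Circle1) :
    zetaP Tarr f n x t =
      (n : ℝ)⁻¹ * ∑ k ∈ Finset.range (n + 1), ramp (n * t - k) * fnk Tarr f n k x := by
  rw [zetaP, sum_range_floor_add_fract_mul (natCast_mul_mem_Icc n ht) fun k ↦ fnk Tarr f n k x]

theorem xiP_eq_sum_ramp (hf : Continuous f) (μ : Measure Circle1) [IsFiniteMeasure μ] {t : ℝ}
    (ht : t ∈ Icc (0 : ℝ) 1) (x : Circle1) :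
    xiP Tarr f μ n x t = √n * (n : ℝ)⁻¹ * ∑ k ∈ Finset.range (n + 1),
      ramp (n * t - k) * (fnk Tarr f n k x - ∫ y, fnk Tarr f n k y ∂μ) := by
  have integrable (k : ℕ) : Integrable (fun x ↦ ramp (n * t - k) * fnk Tarr f n k x) μ :=
    integrable_of_continuous μ (continuous_const.mul (continuous_fnk Tarr n k hf))
  simp only [xiP, zetaP_eq_sum_ramp Tarr n f ht, integral_const_mul,
    integral_finsetSum _ fun k _ ↦ integrable k, ← mul_sub, ← Finset.sum_sub_distrib, mul_assoc]

theorem continuous_xiP (hf : Continuous f) (μ : Measure Circle1) [IsFiniteMeasure μ] :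
    Continuous (Function.uncurry fun x (t : Icc (0 : ℝ) 1) ↦ xiP Tarr f μ n x t) := by
  have continuous_fnk := fun k ↦ continuous_fnk Tarr n k hf
  have continuous_ramp := continuous_ramp
  simp only [Function.uncurry_def, xiP_eq_sum_ramp Tarr n hf μ (Subtype.prop _)]
  fun_prop

theorem xiP_zero (μ : Measure Circle1) (x : Circle1) : xiP Tarr f μ n x 0 = 0 := by
  simp [xiP, zetaP]

end

theorem integral_sub_integral_pow_le {Ω : Type*} [MeasurableSpace Ω] {μ : Measure Ω}
    [IsProbabilityMeasure μ] {S : Ω → ℝ} {m : ℕ} (hm : Even m) (hS : Integrable S μ)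
    (hSm : Integrable (fun ω ↦ S ω ^ m) μ) :
    ∫ ω, (S ω - ∫ ω', S ω' ∂μ) ^ m ∂μ ≤ 2 ^ m * ∫ ω, S ω ^ m ∂μ := by
  have integrable_const_pow : Integrable (fun _ : Ω ↦ (-∫ ω', S ω' ∂μ) ^ m) μ := integrable_const _
  have jensen : (∫ ω, S ω ∂μ) ^ m ≤ ∫ ω, S ω ^ m ∂μ :=
    hm.convexOn_pow.map_integral_le (continuous_pow m).continuousOn isClosed_univ
      (Eventually.of_forall fun ω ↦ mem_univ (S ω)) hS hSm
  rcases Nat.eq_zero_or_pos m with rfl | hm_pos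
  · simp
  calc ∫ ω, (S ω - ∫ ω', S ω' ∂μ) ^ m ∂μ
      ≤ ∫ ω, 2 ^ (m - 1) * (S ω ^ m + (-∫ ω', S ω' ∂μ) ^ m) ∂μ :=
        integral_mono_of_nonneg (Eventually.of_forall fun ω ↦ hm.pow_nonneg _)
          ((hSm.add integrable_const_pow).const_mul _)
          (Eventually.of_forall fun ω ↦ hm.add_pow_le)
    _ = 2 ^ (m - 1) * (∫ ω, S ω ^ m ∂μ + (∫ ω, S ω ∂μ) ^ m) := by
        rw [integral_const_mul, integral_add hSm integrable_const_pow, integral_const,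
          probReal_univ, one_smul, hm.neg_pow]
    _ ≤ 2 ^ (m - 1) * (∫ ω, S ω ^ m ∂μ + ∫ ω, S ω ^ m ∂μ) := by gcongr
    _ = 2 ^ m * ∫ ω, S ω ^ m ∂μ := by
        rw [← two_mul, ← mul_assoc, ← pow_succ, Nat.sub_add_cancel hm_pos]

section

variable {lam Astar : ℝ} (Tarr : ℕ → ℕ → CM lam Astar) {f : Circle1 → ℝ} (n : ℕ)

theorem xiP_sub_xiP (hf : Continuous f) (μ : Measure Circle1) [IsProbabilityMeasure μ]
    (a : ℕ → ℝ) {s t : ℝ} (hs : s ∈ Icc (0 : ℝ) 1) (ht : t ∈ Icc (0 : ℝ) 1) {S : Circle1 → ℝ}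
    (hS : ∀ x, S x = ∑ k ∈ Finset.range (n + 1),
      (ramp (n * t - k) - ramp (n * s - k)) * (fnk Tarr f n k x - a k)) (x : Circle1) :
    xiP Tarr f μ n x t - xiP Tarr f μ n x s = √n * (n : ℝ)⁻¹ * (S x - ∫ y, S y ∂μ) := by
  have integrable (k : ℕ) : Integrable (fnk Tarr f n k) μ :=
    integrable_of_continuous μ (continuous_fnk Tarr n k hf)
  have integrable_term (k : ℕ) :
      Integrable (fun y ↦ (ramp (n * t - k) - ramp (n * s - k)) * (fnk Tarr f n k y - a k)) μ :=
    ((integrable k).sub (integrable_const (a k))).const_mul _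
  have mean : ∫ y, S y ∂μ = ∑ k ∈ Finset.range (n + 1),
      (ramp (n * t - k) - ramp (n * s - k)) * (∫ y, fnk Tarr f n k y ∂μ - a k) := by
    simp only [hS, integral_finsetSum _ fun k _ ↦ integrable_term k, integral_const_mul,
      integral_sub (integrable _) (integrable_const _), integral_const, probReal_univ, one_smul]
  rw [xiP_eq_sum_ramp Tarr n hf μ hs, xiP_eq_sum_ramp Tarr n hf μ ht, mean, hS, ← mul_sub,
    ← Finset.sum_sub_distrib, ← Finset.sum_sub_distrib]
  refine congrArg _ (Finset.sum_congr rfl fun k _ ↦ ?_)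
  ring

theorem integral_xiP_sub_pow_four_le (hn : 0 < n) (hf : Continuous f) {μ : Measure Circle1}
    [IsProbabilityMeasure μ] {R : NNReal} (hμ : μ ≤ R • volume) {D : ℝ}
    (hD : ∀ c : ℕ → ℝ, (∀ k, 0 ≤ c k) → (∀ k, c k ≤ 1) → ∫ x : Circle1,
      (∑ k ∈ Finset.range (n + 1), c k * (fnk Tarr f n k x - ∫ y : Circle1, fnk Tarr f n k y)) ^ 4 ≤
        D * (∑ k ∈ Finset.range (n + 1), c k) ^ 2)
    {s t : ℝ} (hs : s ∈ Icc (0 : ℝ) 1) (ht : t ∈ Icc (0 : ℝ) 1) (hst : s ≤ t) :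
    ∫ x, (xiP Tarr f μ n x t - xiP Tarr f μ n x s) ^ 4 ∂μ ≤ 16 * R * D * (t - s) ^ 2 := by
  set c : ℕ → ℝ := fun k ↦ ramp (n * t - k) - ramp (n * s - k) with hc
  set S : Circle1 → ℝ := fun x ↦ ∑ k ∈ Finset.range (n + 1),
    c k * (fnk Tarr f n k x - ∫ y : Circle1, fnk Tarr f n k y) with hS
  have continuous_fnk := fun k ↦ continuous_fnk Tarr n k hf
  have continuous_S : Continuous S := by fun_prop
  have c_nonneg (k : ℕ) : 0 ≤ c k := sub_nonneg.2 (monotone_ramp (by gcongr))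
  have c_le_one (k : ℕ) : c k ≤ 1 := by
    linarith [ramp_nonneg (n * s - k), ramp_le_one (n * t - k)]
  have sum_c : ∑ k ∈ Finset.range (n + 1), c k = n * (t - s) := by
    rw [hc, Finset.sum_sub_distrib, sum_ramp (natCast_mul_mem_Icc n hs),
      sum_ramp (natCast_mul_mem_Icc n ht), mul_sub]
  have moment : ∫ x, S x ^ 4 ∂μ ≤ R * (D * (n * (t - s)) ^ 2) :=
    calc ∫ x, S x ^ 4 ∂μ ≤ ∫ x, S x ^ 4 ∂(R • (volume : Measure Circle1)) :=
          integral_mono_measure hμ (Eventually.of_forall fun x ↦ Even.pow_nonneg (by decide) _)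
            (integrable_of_continuous _ (continuous_S.pow 4))
      _ = R * ∫ x : Circle1, S x ^ 4 := integral_smul_nnreal_measure _ _
      _ ≤ R * (D * (n * (t - s)) ^ 2) := by
          rw [← sum_c]
          exact mul_le_mul_of_nonneg_left (hD c c_nonneg c_le_one) R.2
  simp only [xiP_sub_xiP Tarr n hf μ _ hs ht fun x ↦ congrFun hS x, mul_pow, integral_const_mul]
  have variance := integral_sub_integral_pow_le (μ := μ) (m := 4) (by decide)
    (integrable_of_continuous μ continuous_S) (integrable_of_continuous μ (continuous_S.pow 4))
  have normalisation : √n ^ 4 * (n : ℝ)⁻¹ ^ 4 * (n : ℝ) ^ 2 = 1 := by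
    have : (n : ℝ) ≠ 0 := Nat.cast_ne_zero.2 hn.ne'
    rw [pow_mul √n 2 2, Real.sq_sqrt n.cast_nonneg]
    field_simp
  calc √n ^ 4 * (n : ℝ)⁻¹ ^ 4 * ∫ x, (S x - ∫ y, S y ∂μ) ^ 4 ∂μ
      ≤ √n ^ 4 * (n : ℝ)⁻¹ ^ 4 * (2 ^ 4 * (R * (D * (n * (t - s)) ^ 2))) := by
        gcongr
        exact variance.trans (by gcongr)
    _ = √n ^ 4 * (n : ℝ)⁻¹ ^ 4 * (n : ℝ) ^ 2 * (16 * R * D * (t - s) ^ 2) := by ring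
    _ = 16 * R * D * (t - s) ^ 2 := by rw [normalisation, one_mul]

end

theorem exists_integral_xiP_sub_pow_four_le {lam Astar : ℝ} (hlam : 1 < lam) (hA : 0 ≤ Astar)
    {f : Circle1 → ℝ} {K : NNReal} (hf : LipschitzWith K f) (R : NNReal) :
    ∃ M : ℝ, 0 ≤ M ∧ ∀ (Tarr : ℕ → ℕ → CM lam Astar) (n : ℕ) (μ : Measure Circle1)
      [IsProbabilityMeasure μ], 0 < n → μ ≤ R • volume →
      ∀ s ∈ Icc (0 : ℝ) 1, ∀ t ∈ Icc (0 : ℝ) 1,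
        ∫ x, |xiP Tarr f μ n x t - xiP Tarr f μ n x s| ^ 4 ∂μ ≤ M * |t - s| ^ 2 := by
  obtain ⟨D, hD, moment⟩ := exists_integral_weighted_sum_pow_four_le hlam hA hf
  refine ⟨16 * R * D, by positivity, fun Tarr n μ _ hn hμ s hs t ht ↦ ?_⟩
  wlog hst : s ≤ t generalizing s t
  · simpa only [abs_sub_comm] using this t ht s hs (le_of_not_ge hst)
  simp only [Even.pow_abs (show Even 4 by decide), sq_abs]
  exact integral_xiP_sub_pow_four_le Tarr n hn hf.continuous hμ
    (moment Tarr n (n + 1)) hs ht hst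

/-! ### Hölder paths and tightness -/

theorem isCompact_image_ofFun_of_equicontinuous {X α : Type*} [TopologicalSpace X]
    [CompactSpace X] [UniformSpace α] {S : Set (X → α)} (hS : IsCompact S)
    (hequi : Equicontinuous ((↑) : S → X → α)) :
    IsCompact (UniformFun.ofFun '' S : Set (X →ᵤ α)) := by
  have hind : IsInducing (UniformFun.ofFun ∘ ((↑) : S → X → α)) :=
    hequi.inducing_uniformFun_iff_pi.2 .subtypeVal
  have : CompactSpace S := isCompact_iff_compactSpace.1 hS
  simpa only [range_comp, Subtype.range_coe] using isCompact_range hind.continuous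

section HolderWith

variable {X E : Type*} [PseudoMetricSpace X] {C r : NNReal}

theorem isClosed_setOf_holderWith [PseudoMetricSpace E] :
    IsClosed {ω : X → E | HolderWith C r ω} := by
  simp only [HolderWith, ofPred_forall]
  exact isClosed_iInter fun x ↦ isClosed_iInter fun y ↦
    isClosed_le ((continuous_apply x).edist (continuous_apply y)) continuous_const

theorem equicontinuous_of_holderWith [PseudoMetricSpace E] (hr : 0 < r) {S : Set (X → E)}
    (hS : ∀ ω ∈ S, HolderWith C r ω) : Equicontinuous ((↑) : S → X → E) := by
  refine (Metric.uniformEquicontinuous_of_continuity_modulus (fun d ↦ (C : ℝ) * d ^ (r : ℝ)) ?_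
    ((↑) : S → X → E) fun x y ω ↦ (hS ω ω.2).dist_le x y).equicontinuous
  have hcont : Continuous fun d : ℝ ↦ (C : ℝ) * d ^ (r : ℝ) :=
    continuous_const.mul (Real.continuous_rpow_const r.2)
  simpa [Real.zero_rpow (NNReal.coe_ne_zero.2 hr.ne')] using hcont.tendsto 0

theorem isCompact_image_ofFun_holderWith [CompactSpace X] [MetricSpace E] [ProperSpace E]
    (hr : 0 < r) (x₀ : X) (e : E) :
    IsCompact (UniformFun.ofFun '' {ω : X → E | ω x₀ = e ∧ HolderWith C r ω} :
      Set (X →ᵤ E)) := by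
  refine isCompact_image_ofFun_of_equicontinuous ?_ (equicontinuous_of_holderWith hr fun _ h ↦ h.2)
  refine (isCompact_univ_pi fun x ↦
    isCompact_closedBall e (C * dist x x₀ ^ (r : ℝ))).of_isClosed_subset ?_ ?_
  · exact (isClosed_eq (continuous_apply x₀) continuous_const).inter isClosed_setOf_holderWith
  · rintro ω ⟨rfl, hω⟩ x -
    exact hω.dist_le x x₀

end HolderWith

/-- The point `i / 2 ^ m` of the dyadic grid of mesh `2 ^ (-m)` in `[0, 1]`, clamped to `1` when
`2 ^ m < i`. -/
noncomputable def dyadicPoint (m i : ℕ) : Icc (0 : ℝ) 1 := projIcc 0 1 zero_le_one (i / 2 ^ m)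

theorem dyadicPoint_succ_two_mul (m i : ℕ) : dyadicPoint (m + 1) (2 * i) = dyadicPoint m i := by
  unfold dyadicPoint
  congr 1
  push_cast
  field

theorem dyadicPoint_eq_of_two_pow_le {m i j : ℕ} (hi : 2 ^ m ≤ i) (hij : i ≤ j) :
    dyadicPoint m i = dyadicPoint m j := by
  have hone (k : ℕ) (hk : 2 ^ m ≤ k) : dyadicPoint m k = ⟨1, right_mem_Icc.2 zero_le_one⟩ :=
    projIcc_of_right_le _ <| (one_le_div₀ (by positivity)).2 <| by exact_mod_cast hk
  rw [hone i hi, hone j (hi.trans hij)]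

theorem dist_dyadicPoint_succ_le (m i : ℕ) :
    dist (dyadicPoint m i) (dyadicPoint m (i + 1)) ≤ (1 / 2) ^ m := by
  calc
    _ ≤ |(i : ℝ) / 2 ^ m - ((i + 1 : ℕ) : ℝ) / 2 ^ m| := abs_projIcc_sub_projIcc _
    _ = (1 / 2) ^ m := by
      rw [abs_sub_comm, ← sub_div, Nat.cast_succ, add_sub_cancel_left, abs_of_pos (by positivity),
        one_div_pow]

theorem tendsto_dyadicPoint_floor (t : Icc (0 : ℝ) 1) :
    Tendsto (fun m ↦ dyadicPoint m ⌊(t : ℝ) * 2 ^ m⌋₊) atTop (𝓝 t) := by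
  have hfloor : Tendsto (fun m : ℕ ↦ (⌊(t : ℝ) * 2 ^ m⌋₊ : ℝ) / 2 ^ m) atTop (𝓝 t) :=
    (tendsto_nat_floor_mul_div_atTop t.2.1).comp (tendsto_pow_atTop_atTop_of_one_lt one_lt_two)
  simpa only [dyadicPoint, Function.comp_def, projIcc_val] using
    ((continuous_projIcc (h := zero_le_one)).tendsto (t : ℝ)).comp hfloor

theorem floor_two_mul_eq_or {y : ℝ} (hy : 0 ≤ y) :
    ⌊2 * y⌋₊ = 2 * ⌊y⌋₊ ∨ ⌊2 * y⌋₊ = 2 * ⌊y⌋₊ + 1 := by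
  have hle := Nat.floor_le hy
  have hlt := Nat.lt_floor_add_one y
  have hlower : 2 * ⌊y⌋₊ ≤ ⌊2 * y⌋₊ := Nat.le_floor (by push_cast; linarith)
  have hupper : ⌊2 * y⌋₊ < 2 * ⌊y⌋₊ + 2 :=
    (Nat.floor_lt (by linarith)).2 (by push_cast; linarith)
  lia

section Chaining

variable {E : Type*} [PseudoMetricSpace E] {ω : Icc (0 : ℝ) 1 → E} {R θ : ℝ}

theorem dist_dyadicPoint_le_of_le_succ (hR : 0 ≤ R) (hθ : 0 ≤ θ)
    (hω : ∀ m, ∀ i < 2 ^ m, dist (ω (dyadicPoint m i)) (ω (dyadicPoint m (i + 1))) ≤ R * θ ^ m)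
    (m : ℕ) {i j : ℕ} (hij : i ≤ j) (hji : j ≤ i + 1) :
    dist (ω (dyadicPoint m i)) (ω (dyadicPoint m j)) ≤ R * θ ^ m := by
  rcases le_or_gt (2 ^ m) i with hi | hi
  · rw [dyadicPoint_eq_of_two_pow_le hi hij, dist_self]
    positivity
  · rcases hij.eq_or_lt with rfl | hlt
    · rw [dist_self]
      positivity
    · obtain rfl : j = i + 1 := by lia
      exact hω m i hi

theorem dist_dyadicPoint_floor_le (hθ : 0 ≤ θ) (hθ₁ : θ < 1) (hR : 0 ≤ R) (hcont : Continuous ω)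
    (hω : ∀ m, ∀ i < 2 ^ m, dist (ω (dyadicPoint m i)) (ω (dyadicPoint m (i + 1))) ≤ R * θ ^ m)
    (m : ℕ) (t : Icc (0 : ℝ) 1) :
    dist (ω (dyadicPoint m ⌊(t : ℝ) * 2 ^ m⌋₊)) (ω t) ≤ R * θ * θ ^ m / (1 - θ) := by
  refine dist_le_of_le_geometric_of_tendsto θ (R * θ)
    (f := fun m ↦ ω (dyadicPoint m ⌊(t : ℝ) * 2 ^ m⌋₊)) hθ₁ (fun m ↦ ?_)
    ((hcont.tendsto t).comp (tendsto_dyadicPoint_floor t)) m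
  have hfloor := floor_two_mul_eq_or (mul_nonneg t.2.1 (pow_nonneg zero_le_two m))
  rw [show (t : ℝ) * 2 ^ (m + 1) = 2 * (t * 2 ^ m) by ring, ← dyadicPoint_succ_two_mul m,
    show R * θ * θ ^ m = R * θ ^ (m + 1) by ring]
  exact dist_dyadicPoint_le_of_le_succ hR hθ hω (m + 1) (by lia) (by lia)

theorem dist_le_of_dist_dyadicPoint_le (hθ : 0 ≤ θ) (hθ₁ : θ < 1) (hR : 0 ≤ R)
    (hcont : Continuous ω)
    (hω : ∀ m, ∀ i < 2 ^ m, dist (ω (dyadicPoint m i)) (ω (dyadicPoint m (i + 1))) ≤ R * θ ^ m)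
    (m : ℕ) {s t : Icc (0 : ℝ) 1} (hst : dist s t ≤ (1 / 2) ^ m) :
    dist (ω s) (ω t) ≤ R * (1 + θ) / (1 - θ) * θ ^ m := by
  wlog hle : s ≤ t generalizing s t
  · rw [dist_comm] at hst ⊢
    exact this hst (le_of_not_ge hle)
  have hpow : (0 : ℝ) < 2 ^ m := by positivity
  have hupper : (t : ℝ) * 2 ^ m ≤ s * 2 ^ m + 1 := by
    rw [dist_comm, Subtype.dist_eq, Real.dist_eq, one_div_pow, le_div_iff₀ hpow] at hst
    linarith [mul_le_mul_of_nonneg_right (le_abs_self ((t : ℝ) - s)) hpow.le]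
  have hfloor : ⌊(t : ℝ) * 2 ^ m⌋₊ ≤ ⌊(s : ℝ) * 2 ^ m⌋₊ + 1 :=
    (Nat.floor_le_floor hupper).trans_eq (Nat.floor_add_one (mul_nonneg s.2.1 hpow.le))
  have hneigh := dist_dyadicPoint_le_of_le_succ hR hθ hω m
    (Nat.floor_le_floor (mul_le_mul_of_nonneg_right (Subtype.coe_le_coe.2 hle) hpow.le)) hfloor
  have hs := dist_dyadicPoint_floor_le hθ hθ₁ hR hcont hω m s
  have ht := dist_dyadicPoint_floor_le hθ hθ₁ hR hcont hω m t
  rw [dist_comm] at hs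
  have hne : 1 - θ ≠ 0 := (sub_pos.2 hθ₁).ne'
  calc
    _ ≤ _ := dist_triangle4 _ (ω (dyadicPoint m ⌊(s : ℝ) * 2 ^ m⌋₊))
      (ω (dyadicPoint m ⌊(t : ℝ) * 2 ^ m⌋₊)) _
    _ ≤ R * θ * θ ^ m / (1 - θ) + R * θ ^ m + R * θ * θ ^ m / (1 - θ) :=
      add_le_add_three hs hneigh ht
    _ = R * (1 + θ) / (1 - θ) * θ ^ m := by
      field

theorem exists_holderWith_of_dist_dyadicPoint_le (E : Type*) [PseudoMetricSpace E] {r : NNReal}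
    (hr : 0 < r) {R : ℝ} (hR : 0 ≤ R) :
    ∃ C : NNReal, ∀ ω : Icc (0 : ℝ) 1 → E, Continuous ω →
      (∀ m, ∀ i < 2 ^ m, dist (ω (dyadicPoint m i)) (ω (dyadicPoint m (i + 1))) ≤
        R * ((1 / 2 : ℝ) ^ (r : ℝ)) ^ m) → HolderWith C r ω := by
  have hr' : (0 : ℝ) < r := hr
  set θ : ℝ := (1 / 2) ^ (r : ℝ) with hθ
  have hθ₀ : 0 < θ := by positivity
  have hθ₁ : θ < 1 := Real.rpow_lt_one (by norm_num) (by norm_num) hr'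
  have : 0 ≤ R * (1 + θ) / (1 - θ) := div_nonneg (by positivity) (sub_pos.2 hθ₁).le
  lift R * (1 + θ) / (1 - θ) * 2 ^ (r : ℝ) to NNReal using by positivity with C hC
  refine ⟨C, fun ω hcont hω s t ↦ ?_⟩
  suffices dist (ω s) (ω t) ≤ C * dist s t ^ (r : ℝ) by
    rw [edist_dist, edist_dist, ENNReal.ofReal_rpow_of_nonneg dist_nonneg hr'.le,
      ← ENNReal.ofReal_coe_nnreal, ← ENNReal.ofReal_mul C.coe_nonneg]
    exact ENNReal.ofReal_le_ofReal this
  rcases eq_or_ne s t with rfl | hne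
  · rw [dist_self]
    positivity
  obtain ⟨m, hlt, hle⟩ := exists_nat_pow_near_of_lt_one (dist_pos.2 hne)
    (Real.dist_le_of_mem_Icc_01 s.2 t.2) (one_half_pos (α := ℝ)) one_half_lt_one
  have hpow : (1 / 2 : ℝ) ^ m ≤ 2 * dist s t := by
    rw [pow_succ] at hlt
    linarith
  calc
    _ ≤ R * (1 + θ) / (1 - θ) * θ ^ m :=
      dist_le_of_dist_dyadicPoint_le hθ₀.le hθ₁ hR hcont hω m hle
    _ = R * (1 + θ) / (1 - θ) * ((1 / 2) ^ m) ^ (r : ℝ) := by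
      rw [hθ, Real.rpow_pow_comm (by norm_num)]
    _ ≤ R * (1 + θ) / (1 - θ) * (2 * dist s t) ^ (r : ℝ) := by
      gcongr
    _ = _ := by
      rw [hC, Real.mul_rpow zero_le_two dist_nonneg, mul_assoc]

end Chaining

section Kolmogorov

open ProbabilityTheory

variable {Ω E : Type*} {mΩ : MeasurableSpace Ω} {P : Measure Ω} {p q : ℝ} {M : NNReal}

theorem measure_lt_dist_le [PseudoMetricSpace E] {T : Type*} [PseudoMetricSpace T]
    {X : T → Ω → E} (hX : IsKolmogorovProcess X P p q M) {a : ℝ} (ha : 0 < a) (s t : T) :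
    P {ω | a < dist (X s ω) (X t ω)} ≤ ENNReal.ofReal (M * dist s t ^ q / a ^ p) := by
  have hp := hX.p_pos
  have hap : 0 < a ^ p := by positivity
  calc
    _ ≤ P {ω | ENNReal.ofReal (a ^ p) ≤ edist (X s ω) (X t ω) ^ p} := by
      refine measure_mono fun ω (hω : a < _) ↦ ?_
      rw [mem_ofPred, ← ENNReal.ofReal_rpow_of_nonneg ha.le hp.le, edist_dist]
      gcongr
    _ ≤ (∫⁻ ω, edist (X s ω) (X t ω) ^ p ∂P) / ENNReal.ofReal (a ^ p) :=
      meas_ge_le_lintegral_div (hX.measurable_edist.pow_const p).aemeasurable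
        (ENNReal.ofReal_pos.2 hap).ne' ENNReal.ofReal_ne_top
    _ ≤ M * edist s t ^ q / ENNReal.ofReal (a ^ p) := by
      gcongr
      exact hX.kolmogorovCondition s t
    _ = ENNReal.ofReal (M * dist s t ^ q / a ^ p) := by
      rw [ENNReal.ofReal_div_of_pos hap, ENNReal.ofReal_mul (NNReal.coe_nonneg M), edist_dist,
        ENNReal.ofReal_rpow_of_nonneg dist_nonneg hX.q_pos.le, ENNReal.ofReal_coe_nnreal]

variable [PseudoMetricSpace E] {X : Icc (0 : ℝ) 1 → Ω → E}

theorem measure_exists_lt_dist_dyadicPoint_le (hX : IsKolmogorovProcess X P p q M) {R : ℝ}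
    (hR : 0 < R) (r : ℝ) (m : ℕ) :
    P {ω | ∃ i < 2 ^ m, R * ((1 / 2 : ℝ) ^ r) ^ m <
        dist (X (dyadicPoint m i) ω) (X (dyadicPoint m (i + 1)) ω)} ≤
      ENNReal.ofReal (M / R ^ p * ((2 : ℝ) ^ (1 - q + r * p)) ^ m) := by
  have hq := hX.q_pos
  have hincr (i : ℕ) : P {ω | R * ((1 / 2 : ℝ) ^ r) ^ m <
        dist (X (dyadicPoint m i) ω) (X (dyadicPoint m (i + 1)) ω)} ≤
      ENNReal.ofReal (M * ((1 / 2) ^ m) ^ q / (R * ((1 / 2 : ℝ) ^ r) ^ m) ^ p) := by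
    refine (measure_lt_dist_le hX (by positivity) _ _).trans (ENNReal.ofReal_le_ofReal ?_)
    gcongr
    exact dist_dyadicPoint_succ_le m i
  have hunion : {ω | ∃ i < 2 ^ m, R * ((1 / 2 : ℝ) ^ r) ^ m <
        dist (X (dyadicPoint m i) ω) (X (dyadicPoint m (i + 1)) ω)} =
      ⋃ i ∈ Finset.range (2 ^ m), {ω | R * ((1 / 2 : ℝ) ^ r) ^ m <
        dist (X (dyadicPoint m i) ω) (X (dyadicPoint m (i + 1)) ω)} := by
    ext ω
    simp only [mem_ofPred_eq, mem_iUnion, Finset.mem_range, exists_prop]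
  have hratio : (2 : ℝ) ^ m * (((1 / 2) ^ m) ^ q / (((1 / 2 : ℝ) ^ r) ^ m) ^ p) =
      ((2 : ℝ) ^ (1 - q + r * p)) ^ m := by
    rw [← Real.rpow_pow_comm (by norm_num), ← Real.rpow_pow_comm (by positivity), ← div_pow,
      ← mul_pow, Real.rpow_add two_pos, Real.rpow_sub two_pos, Real.rpow_mul zero_le_two]
    simp only [one_div, Real.inv_rpow, zero_le_two, Real.rpow_one, Real.rpow_nonneg, div_inv_eq_mul]
    ring
  rw [hunion]
  refine (measure_biUnion_finset_le _ _).trans <| (Finset.sum_le_sum fun i _ ↦ hincr i).trans_eq ?_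
  rw [Finset.sum_const, Finset.card_range, nsmul_eq_mul, ← ENNReal.ofReal_natCast,
    ← ENNReal.ofReal_mul (by positivity), ← hratio, Real.mul_rpow hR.le (by positivity)]
  congr 1
  push_cast
  ring

theorem measure_exists_forall_lt_dist_dyadicPoint_le (hX : IsKolmogorovProcess X P p q M) {R : ℝ}
    (hR : 0 < R) {r : ℝ} (hr : r * p < q - 1) :
    P {ω | ∃ m, ∃ i < 2 ^ m, R * ((1 / 2 : ℝ) ^ r) ^ m <
        dist (X (dyadicPoint m i) ω) (X (dyadicPoint m (i + 1)) ω)} ≤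
      ENNReal.ofReal (M / R ^ p / (1 - 2 ^ (1 - q + r * p))) := by
  have hratio : (2 : ℝ) ^ (1 - q + r * p) < 1 :=
    Real.rpow_lt_one_of_one_lt_of_neg one_lt_two (by linarith)
  rw [ofPred_exists]
  refine (measure_iUnion_le _).trans <| (ENNReal.tsum_le_tsum
    (measure_exists_lt_dist_dyadicPoint_le hX hR r)).trans_eq ?_
  rw [← ENNReal.ofReal_tsum_of_nonneg (fun m ↦ by positivity)
    ((summable_geometric_of_lt_one (by positivity) hratio).mul_left _), tsum_mul_left,
    tsum_geometric_of_lt_one (by positivity) hratio, ← div_eq_mul_inv]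

theorem exists_measure_not_holderWith_le (E : Type*) [PseudoMetricSpace E] {p q : ℝ}
    (hp : 0 < p) (M : NNReal) {r : NNReal} (hr : 0 < r) (hrq : r * p < q - 1) {ε : ℝ}
    (hε : 0 < ε) :
    ∃ C : NNReal, ∀ {Ω : Type*} {_ : MeasurableSpace Ω} {P : Measure Ω} {X : Icc (0 : ℝ) 1 → Ω → E},
      IsKolmogorovProcess X P p q M → (∀ ω, Continuous fun t ↦ X t ω) →
      P {ω | ¬ HolderWith C r fun t ↦ X t ω} ≤ ENNReal.ofReal ε := by
  have hlim : Tendsto (fun R : ℝ ↦ M / R ^ p / (1 - 2 ^ (1 - q + r * p))) atTop (𝓝 0) := by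
    simpa using ((tendsto_rpow_atTop hp).const_div_atTop (M : ℝ)).div_const
      (1 - (2 : ℝ) ^ (1 - q + r * p))
  obtain ⟨R, hR, hRε⟩ := ((eventually_gt_atTop 0).and (hlim.eventually_le_const hε)).exists
  obtain ⟨C, hC⟩ := exists_holderWith_of_dist_dyadicPoint_le E hr hR.le
  refine ⟨C, fun {Ω _ P X} hX hcont ↦ (measure_mono fun ω hω ↦ ?_).trans <|
    (measure_exists_forall_lt_dist_dyadicPoint_le hX hR hrq).trans (ENNReal.ofReal_le_ofReal hRε)⟩
  by_contra! hincr
  exact hω (hC _ (hcont ω)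
    (by simpa only [mem_ofPred_eq, not_exists, not_and, not_lt] using hincr))

end Kolmogorov

theorem exists_isCompact_measure_path_notMem_le {E : Type*} [MetricSpace E] [ProperSpace E]
    {p q : ℝ} (hp : 0 < p) (hq : 1 < q) (M : NNReal) (e : E) {ε : ℝ} (hε : 0 < ε) :
    ∃ 𝒦 : Set (Icc (0 : ℝ) 1 →ᵤ E), IsCompact 𝒦 ∧ ∀ {Ω : Type*} {_ : MeasurableSpace Ω}
      {P : Measure Ω} {X : Icc (0 : ℝ) 1 → Ω → E},
      ProbabilityTheory.IsKolmogorovProcess X P p q M → (∀ ω, Continuous fun t ↦ X t ω) →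
      (∀ ω, X 0 ω = e) → P {ω | UniformFun.ofFun (fun t ↦ X t ω) ∉ 𝒦} ≤ ENNReal.ofReal ε := by
  obtain ⟨r, hr, hrq⟩ : ∃ r : NNReal, 0 < r ∧ r * p < q - 1 := by
    obtain ⟨r, hr, hrq⟩ := exists_between (div_pos (sub_pos.2 hq) hp)
    exact ⟨⟨r, hr.le⟩, hr, (lt_div_iff₀ hp).1 hrq⟩
  obtain ⟨C, hC⟩ := exists_measure_not_holderWith_le E hp M hr hrq hε
  refine ⟨_, isCompact_image_ofFun_holderWith (C := C) hr (0 : Icc (0 : ℝ) 1) e,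
    fun {Ω _ P X} hX hcont h₀ ↦ (measure_mono fun ω hω hholder ↦ ?_).trans (hC hX hcont)⟩
  exact hω ⟨_, ⟨h₀ ω, hholder⟩, rfl⟩

theorem continuous_ofFun_of_continuous_uncurry {Ω T E : Type*} [UniformSpace Ω]
    [WeaklyLocallyCompactSpace Ω] [UniformSpace T] [CompactSpace T] [UniformSpace E]
    {f : Ω → T → E} (hf : Continuous (Function.uncurry f)) :
    Continuous fun ω ↦ UniformFun.ofFun (f ω) := by
  refine continuous_iff_continuousAt.2 fun ω ↦ ?_
  rw [ContinuousAt, UniformFun.tendsto_iff_tendstoUniformly]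
  exact hf.tendstoUniformly f ω

theorem isKolmogorovProcess_of_integral_dist_pow_le {Ω T E : Type*} [MeasurableSpace Ω]
    {P : Measure Ω} [PseudoMetricSpace T] [PseudoMetricSpace E] [SecondCountableTopology E]
    [MeasurableSpace E] [BorelSpace E] {X : T → Ω → E} {p q : ℕ} {M : NNReal}
    (hX : ∀ t, Measurable (X t)) (hp : 0 < p) (hq : 0 < q)
    (hint : ∀ s t, Integrable (fun ω ↦ dist (X s ω) (X t ω) ^ p) P)
    (hM : ∀ s t, ∫ ω, dist (X s ω) (X t ω) ^ p ∂P ≤ M * dist s t ^ q) :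
    ProbabilityTheory.IsKolmogorovProcess X P p q M := by
  refine .mk_of_secondCountableTopology hX (fun s t ↦ ?_) (mod_cast hp) (mod_cast hq)
  calc
    ∫⁻ ω, edist (X s ω) (X t ω) ^ (p : ℝ) ∂P
      = ∫⁻ ω, ENNReal.ofReal (dist (X s ω) (X t ω) ^ p) ∂P := by
        simp only [edist_dist, ENNReal.rpow_natCast, ENNReal.ofReal_pow dist_nonneg]
    _ = ENNReal.ofReal (∫ ω, dist (X s ω) (X t ω) ^ p ∂P) :=
      (ofReal_integral_eq_lintegral_ofReal (hint s t) (ae_of_all _ fun ω ↦ by positivity)).symm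
    _ ≤ ENNReal.ofReal (M * dist s t ^ q) := ENNReal.ofReal_le_ofReal (hM s t)
    _ = M * edist s t ^ (q : ℝ) := by
      rw [ENNReal.ofReal_mul M.coe_nonneg, ENNReal.ofReal_coe_nnreal,
        ENNReal.ofReal_pow dist_nonneg, edist_dist, ENNReal.rpow_natCast]

/-! ### Measures with bounded density -/

section Density

variable {α : Type*} {mα : MeasurableSpace α} {μ : Measure α} {ρ : α → ℝ}

theorem integral_withDensity_ofReal_eq (hρ : AEMeasurable ρ μ) (hρ₀ : ∀ x, 0 ≤ ρ x) (g : α → ℝ) :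
    ∫ x, g x ∂μ.withDensity (fun x ↦ ENNReal.ofReal (ρ x)) = ∫ x, g x * ρ x ∂μ := by
  rw [integral_withDensity_eq_integral_toReal_smul₀ hρ.ennreal_ofReal (by simp)]
  simp only [ENNReal.toReal_ofReal (hρ₀ _), smul_eq_mul, mul_comm]

theorem withDensity_ofReal_le_smul {R : NNReal} (hR : ∀ᵐ x ∂μ, ρ x ≤ R) :
    μ.withDensity (fun x ↦ ENNReal.ofReal (ρ x)) ≤ R • μ := by
  refine (withDensity_mono (g := fun _ ↦ (R : ENNReal)) ?_).trans_eq (withDensity_const _)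
  filter_upwards [hR] with x hx
  exact ENNReal.ofReal_le_coe.2 hx

end Density

theorem isProbabilityMeasure_withDensity {ρ : Circle1 → ℝ} (hρ : IsProbDensity ρ) :
    IsProbabilityMeasure
      ((volume : Measure Circle1).withDensity fun x ↦ ENNReal.ofReal (ρ x)) := by
  refine ⟨?_⟩
  rw [withDensity_apply _ .univ, Measure.restrict_univ,
    ← ofReal_integral_eq_lintegral_ofReal hρ.1 (Eventually.of_forall hρ.2.2), hρ.2.1,
    ENNReal.ofReal_one]

theorem arcDist_le_one (z x y : Circle1) : arcDist z x y ≤ 1 := by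
  have hx := (AddCircle.equivIoc 1 (zrep z) x).2
  have hy := (AddCircle.equivIoc 1 (zrep z) y).2
  unfold arcDist arcCoord
  exact abs_sub_le_iff.2 ⟨by linarith [hx.2, hy.1], by linarith [hy.2, hx.1]⟩

theorem exists_ae_le_of_lipOnArc {z : Circle1} {L : ℝ} {ρ : Circle1 → ℝ} (hρ : LipOnArc z L ρ) :
    ∃ R : NNReal, ∀ᵐ x : Circle1, ρ x ≤ R := by
  have hz : (volume : Measure Circle1) {z} = 0 := by
    simpa [Metric.closedBall_zero] using AddCircle.volume_closedBall (1 : ℝ) (x := z) 0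
  have hne : ∀ᵐ x : Circle1, x ≠ z := compl_mem_ae_iff.2 hz
  obtain ⟨x₀, hx₀⟩ := hne.exists
  refine ⟨(ρ x₀ + |L|).toNNReal, hne.mono fun x hx ↦ le_trans ?_ (Real.le_coe_toNNReal _)⟩
  have hdist : L * arcDist z x x₀ ≤ |L| :=
    (mul_le_mul_of_nonneg_right (le_abs_self L) (abs_nonneg _)).trans
      (mul_le_of_le_one_right (abs_nonneg L) (arcDist_le_one z x x₀))
  linarith [le_abs_self (ρ x - ρ x₀), hρ x x₀ hx hx₀]

section

variable {lam Astar : ℝ} (Tarr : ℕ → ℕ → CM lam Astar) {f : Circle1 → ℝ} {ρ : Circle1 → ℝ}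

theorem xiD_eq_xiP (f : Circle1 → ℝ) (hρ : IsProbDensity ρ) :
    xiD Tarr f ρ = xiP Tarr f (volume.withDensity fun x ↦ ENNReal.ofReal (ρ x)) := by
  funext n x t
  rw [xiP, integral_withDensity_ofReal_eq hρ.1.aemeasurable hρ.2.2]
  rfl

theorem isKolmogorovProcess_xiP (n : ℕ) (hf : Continuous f) (μ : Measure Circle1)
    [IsFiniteMeasure μ] {M : NNReal}
    (hM : ∀ s ∈ Icc (0 : ℝ) 1, ∀ t ∈ Icc (0 : ℝ) 1,
      ∫ x, |xiP Tarr f μ n x t - xiP Tarr f μ n x s| ^ 4 ∂μ ≤ M * |t - s| ^ 2) :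
    ProbabilityTheory.IsKolmogorovProcess (fun (t : Icc (0 : ℝ) 1) x ↦ xiP Tarr f μ n x t)
      μ (4 : ℕ) (2 : ℕ) M := by
  have hcont (t : Icc (0 : ℝ) 1) : Continuous fun x ↦ xiP Tarr f μ n x t :=
    (continuous_xiP Tarr n hf μ).uncurry_right t
  refine isKolmogorovProcess_of_integral_dist_pow_le (fun t ↦ (hcont t).measurable) four_pos
    two_pos (fun s t ↦ integrable_of_continuous μ (((hcont s).dist (hcont t)).pow 4)) ?_
  exact fun s t ↦ hM t t.2 s s.2

theorem measurable_pathOf_xiP (n : ℕ) (hf : Continuous f) (μ : Measure Circle1)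
    [IsFiniteMeasure μ] : Measurable fun x ↦ pathOf (xiP Tarr f μ n x) :=
  have : BorelSpace PathSpace := ⟨rfl⟩
  (continuous_ofFun_of_continuous_uncurry (continuous_xiP Tarr n hf μ)).measurable

end

theorem exists_isCompact_map_pathOf_xiP_compl_le (lam Astar : ℝ) (M : NNReal) {ε : ℝ}
    (hε : 0 < ε) :
    ∃ 𝒦 : Set PathSpace, IsCompact 𝒦 ∧ ∀ (Tarr : ℕ → ℕ → CM lam Astar) (f : Circle1 → ℝ)
      (n : ℕ) (μ : Measure Circle1) [IsFiniteMeasure μ], Continuous f →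
      (∀ s ∈ Icc (0 : ℝ) 1, ∀ t ∈ Icc (0 : ℝ) 1,
        ∫ x, |xiP Tarr f μ n x t - xiP Tarr f μ n x s| ^ 4 ∂μ ≤ M * |t - s| ^ 2) →
      μ.map (fun x ↦ pathOf (xiP Tarr f μ n x)) 𝒦ᶜ ≤ ENNReal.ofReal ε := by
  obtain ⟨𝒦, h𝒦, htight⟩ :=
    exists_isCompact_measure_path_notMem_le (p := (4 : ℕ)) (q := (2 : ℕ)) (by norm_num)
      (by norm_num) M (0 : ℝ) hε
  refine ⟨𝒦, h𝒦, fun Tarr f n μ _ hf hM ↦ ?_⟩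
  have : BorelSpace PathSpace := ⟨rfl⟩
  rw [Measure.map_apply (measurable_pathOf_xiP Tarr n hf μ) h𝒦.isClosed.measurableSet.compl]
  exact htight (isKolmogorovProcess_xiP Tarr n hf μ hM)
    (fun x ↦ (continuous_xiP Tarr n hf μ).uncurry_left x) (xiP_zero Tarr n μ)

theorem statement18_general {lam Astar : ℝ} (hlam : 1 < lam) (Tarr : ℕ → ℕ → CM lam Astar)
    (f : Circle1 → ℝ) (hf : ∃ K : NNReal, LipschitzWith K f) (ρ : Circle1 → ℝ)
    (hρ : IsProbDensity ρ) (R : NNReal) (hR : ∀ᵐ x, ρ x ≤ R) :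
    (∃ K : ℝ, 0 < K ∧ ∀ n : ℕ, 1 ≤ n →
      ∀ t₁ ∈ Set.Icc (0 : ℝ) 1, ∀ t₂ ∈ Set.Icc (0 : ℝ) 1,
        (∫ x : Circle1, |xiD Tarr f ρ n x t₂ - xiD Tarr f ρ n x t₁| ^ 4 * ρ x) ≤
          K * |t₂ - t₁| ^ 2) ∧
    (∀ ε : ℝ, 0 < ε → ∃ K : Set PathSpace, IsCompact K ∧
      ∀ n : ℕ, 1 ≤ n →
        Measure.map (fun x ↦ pathOf (xiD Tarr f ρ n x))
            (volume.withDensity (fun x ↦ ENNReal.ofReal (ρ x))) Kᶜ ≤ ENNReal.ofReal ε) := by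
  obtain ⟨_, hf⟩ := hf
  have := isProbabilityMeasure_withDensity hρ
  have hA : 0 ≤ Astar := (Tarr 0 0).Astar_nonneg
  obtain ⟨M, hM, hmoment⟩ := exists_integral_xiP_sub_pow_four_le hlam hA hf R
  lift M to NNReal using hM
  replace hmoment := fun n hn ↦ hmoment Tarr n _ hn (withDensity_ofReal_le_smul hR)
  rw [xiD_eq_xiP Tarr f hρ]
  refine ⟨⟨M + 1, by positivity, fun n hn s hs t ht ↦ ?_⟩, fun ε hε ↦ ?_⟩
  · rw [← integral_withDensity_ofReal_eq hρ.1.aemeasurable hρ.2.2]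
    exact (hmoment n hn s hs t ht).trans (by gcongr; exact le_add_of_nonneg_right zero_le_one)
  · obtain ⟨𝒦, h𝒦, htight⟩ := exists_isCompact_map_pathOf_xiP_compl_le lam Astar M hε
    exact ⟨𝒦, h𝒦, fun n hn ↦ htight Tarr f n _ hf.continuous (hmoment n hn)⟩

/-- Lemma `lem:xi_tight`.  If the density of `μ` is Lipschitz on `J_z`
with constant `L`, then the fourth moments satisfy the Kolmogorov bound
`μ[|ξₙ(t₂) − ξₙ(t₁)|⁴] ≤ K|t₂ − t₁|²`, and consequently the laws of the random paths
`t ↦ ξₙ(x,t)` on `C⁰([0,1],ℝ)` form a tight sequence. -/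
theorem statement18 {lam Astar : ℝ} (hlam : 1 < lam) (hA : 0 < Astar)
    {η : ℝ} (hη : η ∈ Set.Ioo (0 : ℝ) 1)
    (γ : ℝ → CM lam Astar) (hγ : HolderCurve η γ)
    (Tarr : ℕ → ℕ → CM lam Astar) (hT : ArrayApprox η γ Tarr)
    (f : Circle1 → ℝ) (hf : ∃ K : NNReal, LipschitzWith K f)
    (L : ℝ) (hL : 0 < L) (z : Circle1) (ρ : Circle1 → ℝ)
    (hρ : IsProbDensity ρ) (hρlip : LipOnArc z L ρ) :
    (∃ K : ℝ, 0 < K ∧ ∀ n : ℕ, 1 ≤ n →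
      ∀ t₁ ∈ Set.Icc (0 : ℝ) 1, ∀ t₂ ∈ Set.Icc (0 : ℝ) 1,
        (∫ x : Circle1, |xiD Tarr f ρ n x t₂ - xiD Tarr f ρ n x t₁| ^ 4 * ρ x) ≤
          K * |t₂ - t₁| ^ 2) ∧
    (∀ ε : ℝ, 0 < ε → ∃ K : Set PathSpace, IsCompact K ∧
      ∀ n : ℕ, 1 ≤ n →
        Measure.map (fun x => pathOf (xiD Tarr f ρ n x))
            (volume.withDensity (fun x => ENNReal.ofReal (ρ x))) Kᶜ ≤ ENNReal.ofReal ε) := by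
  obtain ⟨R, hR⟩ := exists_ae_le_of_lipOnArc hρlip
  exact statement18_general hlam Tarr f hf ρ hρ R hR
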